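/- arXiv:1205.0873 — 2 statements merged into one kernel-verified Lean document; each statement's English description precedes it below -/
import Mathlib

section
/- Let X be a proper geodesic ptolemaic metric space. Then for all x,y ∈ X there exists a unique geodesic c_{xy} : [0,1] → X with c_{xy}(0) = x, c_{xy}(1) = y and d(c_{xy}(s), c_{xy}(t)) = |s−t|·d(x,y) for all s,t ∈ [0,1]; moreover the map X × X × [0,1] → X, (x,y,t) ↦ c_{xy}(t), is continuous. -/
open Metric Set Filter Topology

/-- A metric space is ptolemaic if all quadruples satisfy the Ptolemy inequality. -/
def Ptolemaic (X : Type*) [MetricSpace X] : Prop :=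
  ∀ x y z w : X, dist x y * dist z w ≤ dist x z * dist y w + dist x w * dist y z

/-- A metric space is geodesic if every pair of points is joined by a geodesic. -/
def GeodesicMetricSpace (X : Type*) [MetricSpace X] : Prop :=
  ∀ x y : X, ∃ c : ℝ → X, c 0 = x ∧ c 1 = y ∧
    ∀ s ∈ Set.Icc (0:ℝ) 1, ∀ t ∈ Set.Icc (0:ℝ) 1,
      dist (c s) (c t) = dist x y * |s - t|

/-- `c` is the (affinely parametrized) geodesic on `[0,1]` from `x` to `y`. -/
def IsGeodesicFromTo {X : Type*} [MetricSpace X]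
    (x y : X) (c : Set.Icc (0:ℝ) 1 → X) : Prop :=
  c ⟨0, by norm_num⟩ = x ∧ c ⟨1, by norm_num⟩ = y ∧
    ∀ s t : Set.Icc (0:ℝ) 1, dist (c s) (c t) = |(s : ℝ) - (t : ℝ)| * dist x y

/-!
Let `c`, `e` be geodesics from `x` to `y`, put `G t = d(c t, e t)`, let `m` be a midpoint of `c u`
and `e u`, and put `S t = d(m, c t) + d(m, e t)`. Distances to a midpoint are at most the average of
the distances to the ends, so `d(x, m) = u d(x, y)` and `d(y, m) = (1 - u) d(x, y)`, and the Ptolemy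
inequality for `x, m, c t, e t` and for `y, m, c t, e t` reads `u G t ≤ t S t` and
`(1 - u) G t ≤ (1 - t) S t`. Both are equalities at `t = u`; if `S` and `G` were differentiable
there, then `G u = u (G' u - S' u) = -(1 - u) (G' u - S' u)`, so `G u = 0`.

Since `m` depends on `u`, differentiability of `S` needs an argument: by Rademacher, almost every
`u` is a point of differentiability of `d(z, c t)` for all `z` in a countable dense set, and the
Ptolemy inequality bounds the increments of `d(z, c t) d(w, c u) - d(w, c t) d(z, c u)` by a
multiple of `d(z, w)`, which carries differentiability over to every `z ≠ c u`.

For continuity, a limit along an ultrafilter of the geodesics between converging endpoints exists by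
properness and is again a geodesic, so by uniqueness it is the chosen one.
-/

lemma differentiableAt_of_forall_exists_approx {E : Type*} [NormedAddCommGroup E]
    [NormedSpace ℝ E] [CompleteSpace E] {f : ℝ → E} {t : ℝ}
    (h : ∀ ε > 0, ∃ g : ℝ → E, DifferentiableAt ℝ g t ∧
      ∀ᶠ s in 𝓝 t, ‖(f s - f t) - (g s - g t)‖ ≤ ε * |s - t|) :
    DifferentiableAt ℝ f t := by
  suffices hcauchy : Cauchy (map (slope f t) (𝓝[≠] t)) by
    obtain ⟨f', hf'⟩ := cauchy_map_iff_exists_tendsto.1 hcauchy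
    exact (hasDerivAt_iff_tendsto_slope.2 hf').differentiableAt
  refine Metric.cauchy_iff.2 ⟨inferInstance, fun ε hε => ?_⟩
  obtain ⟨g, hg, hfg⟩ := h (ε / 4) (by positivity)
  have hslope : ∀ᶠ s in 𝓝[≠] t, dist (slope g t s) (deriv g t) < ε / 4 :=
    Metric.tendsto_nhds.1 (hasDerivAt_iff_tendsto_slope.1 hg.hasDerivAt) _ (by positivity)
  have hclose : ∀ᶠ s in 𝓝[≠] t, dist (slope f t s) (slope g t s) ≤ ε / 4 := by
    filter_upwards [hfg.filter_mono nhdsWithin_le_nhds, self_mem_nhdsWithin] with s hs hst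
    have hpos : 0 < |s - t| := abs_pos.2 (sub_ne_zero.2 hst)
    rw [dist_eq_norm, slope_def_module, slope_def_module, ← smul_sub, norm_smul, norm_inv,
      Real.norm_eq_abs, inv_mul_le_iff₀ hpos, mul_comm]
    exact hs
  refine ⟨ball (deriv g t) (ε / 2), ?_, fun a ha b hb => ?_⟩
  · rw [mem_map]
    filter_upwards [hslope, hclose] with s h₁ h₂
    exact mem_ball.2 (by linarith [dist_triangle (slope f t s) (slope g t s) (deriv g t)])
  · linarith [dist_triangle_right a b (deriv g t), mem_ball.1 ha, mem_ball.1 hb]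

lemma eq_zero_of_differentiableAt_of_eventually_mul_le {S G : ℝ → ℝ} {u : ℝ}
    (hS : DifferentiableAt ℝ S u) (hG : DifferentiableAt ℝ G u) (hu : S u = G u)
    (h₀ : ∀ᶠ t in 𝓝 u, u * G t ≤ t * S t)
    (h₁ : ∀ᶠ t in 𝓝 u, (1 - u) * G t ≤ (1 - t) * S t) : G u = 0 := by
  have hmin₀ : IsLocalMin (fun t => t * S t - u * G t) u := by
    filter_upwards [h₀] with t ht
    rw [hu]
    linarith
  have hmin₁ : IsLocalMin (fun t => (1 - t) * S t - (1 - u) * G t) u := by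
    filter_upwards [h₁] with t ht
    rw [hu]
    linarith
  have hderiv₀ := hmin₀.hasDerivAt_eq_zero
    (((hasDerivAt_id u).mul hS.hasDerivAt).sub (hG.hasDerivAt.const_mul u))
  have hderiv₁ := hmin₁.hasDerivAt_eq_zero
    ((((hasDerivAt_id u).const_sub 1).mul hS.hasDerivAt).sub (hG.hasDerivAt.const_mul (1 - u)))
  simp only [id, hu] at hderiv₀ hderiv₁
  linear_combination (1 - u) * hderiv₀ - u * hderiv₁

lemma exists_tendsto_of_isBoundedUnder_dist {X : Type*} [PseudoMetricSpace X] [ProperSpace X]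
    {α : Type*} {U : Ultrafilter α} {f : α → X} {x : X}
    (h : IsBoundedUnder (· ≤ ·) U fun a => dist x (f a)) :
    ∃ z, Tendsto f U (𝓝 z) := by
  obtain ⟨R, hR⟩ := h
  obtain ⟨z, -, hz⟩ := (isCompact_closedBall x R).ultrafilter_le_nhds (U.map f)
    (le_principal_iff.2 ((eventually_map.1 hR).mono fun a ha => mem_closedBall'.2 ha))
  exact ⟨z, hz⟩

section PtolemaicSpace

variable {X : Type*} [MetricSpace X]

/-- The points at which a geodesic from `x` to `y`, parametrized by `[0, 1]`, may be at time `t`. -/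
def divisionPoints (x y : X) (t : ℝ) : Set X :=
  {p | dist x p = t * dist x y ∧ dist y p = (1 - t) * dist x y}

lemma divisionPoints_symm (x y : X) (t : ℝ) :
    divisionPoints y x (1 - t) = divisionPoints x y t := by
  simp only [divisionPoints, dist_comm y x, sub_sub_cancel, and_comm]

namespace Ptolemaic

lemma abs_dist_mul_dist_sub_le (hPT : Ptolemaic X) (z w p q : X) :
    |dist z p * dist w q - dist w p * dist z q| ≤ dist z w * dist p q := by
  have hzw := hPT z p w q
  have hwz := hPT w p z q
  rw [dist_comm p w] at hzw
  rw [dist_comm p z, dist_comm w z] at hwz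
  exact abs_sub_le_iff.2 ⟨by linarith, by linarith⟩

lemma dist_midpoint_le (hPT : Ptolemaic X) {a b m : X} (ha : dist m a = dist a b / 2)
    (hb : dist m b = dist a b / 2) (z : X) : dist z m ≤ (dist z a + dist z b) / 2 := by
  obtain rfl | hab := eq_or_ne a b
  · obtain rfl : m = a := dist_eq_zero.1 (by simpa using ha)
    linarith
  · refine le_of_mul_le_mul_right ?_ (dist_pos.2 hab)
    have h := hPT z m a b
    rw [ha, hb] at h
    linarith

lemma midpoint_mem_divisionPoints (hPT : Ptolemaic X) {x y a b m : X} {t : ℝ}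
    (ha : a ∈ divisionPoints x y t) (hb : b ∈ divisionPoints x y t)
    (hma : dist m a = dist a b / 2) (hmb : dist m b = dist a b / 2) :
    m ∈ divisionPoints x y t := by
  have hx := hPT.dist_midpoint_le hma hmb x
  have hy := hPT.dist_midpoint_le hma hmb y
  rw [ha.1, hb.1] at hx
  rw [ha.2, hb.2] at hy
  have hxy := dist_triangle_right x y m
  exact ⟨by linarith, by linarith⟩

lemma mul_dist_le_of_mem_divisionPoints (hPT : Ptolemaic X) {x y a b m : X} {t u : ℝ}
    (hxy : x ≠ y) (hm : m ∈ divisionPoints x y u) (ha : a ∈ divisionPoints x y t)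
    (hb : b ∈ divisionPoints x y t) : u * dist a b ≤ t * (dist m a + dist m b) := by
  refine le_of_mul_le_mul_right ?_ (dist_pos.2 hxy)
  have h := hPT x m a b
  rw [hm.1, ha.1, hb.1] at h
  linarith

lemma eq_of_differentiableAt_dist_midpoint (hPT : Ptolemaic X) {x y : X} {γ δ : ℝ → X}
    (hγ : ∀ t ∈ Icc (0 : ℝ) 1, γ t ∈ divisionPoints x y t)
    (hδ : ∀ t ∈ Icc (0 : ℝ) 1, δ t ∈ divisionPoints x y t) {u : ℝ} (hu : u ∈ Ioo (0 : ℝ) 1)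
    {m : X} (hmγ : dist m (γ u) = dist (γ u) (δ u) / 2)
    (hmδ : dist m (δ u) = dist (γ u) (δ u) / 2)
    (hdγ : DifferentiableAt ℝ (fun t => dist m (γ t)) u)
    (hdδ : DifferentiableAt ℝ (fun t => dist m (δ t)) u)
    (hdγδ : DifferentiableAt ℝ (fun t => dist (γ t) (δ t)) u) : γ u = δ u := by
  have hγu := hγ u (Ioo_subset_Icc_self hu)
  have hδu := hδ u (Ioo_subset_Icc_self hu)
  obtain rfl | hxy := eq_or_ne x y
  · have hγx : x = γ u := by simpa using hγu.1
    have hδx : x = δ u := by simpa using hδu.1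
    exact hγx.symm.trans hδx
  have hm := hPT.midpoint_mem_divisionPoints hγu hδu hmγ hmδ
  refine dist_eq_zero.1 (eq_zero_of_differentiableAt_of_eventually_mul_le (hdγ.add hdδ) hdγδ
    (by simp [hmγ, hmδ]) ?_ ?_)
  · filter_upwards [Icc_mem_nhds hu.1 hu.2] with t ht
    exact hPT.mul_dist_le_of_mem_divisionPoints hxy hm (hγ t ht) (hδ t ht)
  · filter_upwards [Icc_mem_nhds hu.1 hu.2] with t ht
    rw [← divisionPoints_symm] at hm
    exact hPT.mul_dist_le_of_mem_divisionPoints hxy.symm hm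
      (divisionPoints_symm x y t ▸ hγ t ht) (divisionPoints_symm x y t ▸ hδ t ht)

lemma differentiableAt_dist_of_dense (hPT : Ptolemaic X) {K : NNReal} {γ : ℝ → X}
    (hγ : LipschitzWith K γ) {D : Set X} (hD : Dense D) {t : ℝ}
    (hdiff : ∀ w ∈ D, DifferentiableAt ℝ (fun s => dist w (γ s)) t) {z : X} (hz : z ≠ γ t) :
    DifferentiableAt ℝ (fun s => dist z (γ s)) t := by
  refine differentiableAt_of_forall_exists_approx fun ε hε => ?_
  have hlim : Tendsto (fun w => dist z w * K / dist w (γ t)) (𝓝 z) (𝓝 0) := by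
    have hcont : ContinuousAt (fun w => dist z w * K / dist w (γ t)) z :=
      ContinuousAt.div (by fun_prop) (by fun_prop) (dist_ne_zero.2 hz)
    simpa using hcont.tendsto
  obtain ⟨w, hwD, hwε, hw⟩ := ((mem_closure_iff_frequently.1 (hD z)).and_eventually
    ((hlim.eventually (gt_mem_nhds hε)).and (isOpen_ne.mem_nhds hz))).exists
  have hwpos : 0 < dist w (γ t) := dist_pos.2 hw
  refine ⟨fun s => dist z (γ t) / dist w (γ t) * dist w (γ s), (hdiff w hwD).const_mul _,
    .of_forall fun s => ?_⟩
  calc ‖(dist z (γ s) - dist z (γ t)) - (dist z (γ t) / dist w (γ t) * dist w (γ s)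
          - dist z (γ t) / dist w (γ t) * dist w (γ t))‖
      = |(dist z (γ s) * dist w (γ t) - dist w (γ s) * dist z (γ t)) / dist w (γ t)| := by
        rw [Real.norm_eq_abs]
        congr 1
        field_simp
        ring
    _ = |dist z (γ s) * dist w (γ t) - dist w (γ s) * dist z (γ t)| / dist w (γ t) := by
        rw [abs_div, abs_of_pos hwpos]
    _ ≤ dist z w * (K * |s - t|) / dist w (γ t) := by
        gcongr
        exact (hPT.abs_dist_mul_dist_sub_le z w _ _).trans
          (mul_le_mul_of_nonneg_left (hγ.dist_le_mul s t) dist_nonneg)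
    _ = dist z w * K / dist w (γ t) * |s - t| := by ring
    _ ≤ ε * |s - t| := by gcongr

lemma ae_differentiableAt_dist [TopologicalSpace.SeparableSpace X] (hPT : Ptolemaic X)
    {K : NNReal} {γ : ℝ → X} (hγ : LipschitzWith K γ) :
    ∀ᵐ t, ∀ z, z ≠ γ t → DifferentiableAt ℝ (fun s => dist z (γ s)) t := by
  obtain ⟨D, hDcount, hD⟩ := TopologicalSpace.exists_countable_dense X
  have hae : ∀ᵐ t, ∀ w ∈ D, DifferentiableAt ℝ (fun s => dist w (γ s)) t :=
    (MeasureTheory.ae_ball_iff hDcount).2 fun w _ =>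
      ((LipschitzWith.dist_right w).comp hγ).ae_differentiableAt_real
  filter_upwards [hae] with t ht z hz
  exact hPT.differentiableAt_dist_of_dense hγ hD ht hz

end Ptolemaic

namespace GeodesicMetricSpace

lemma exists_isGeodesicFromTo (hgeo : GeodesicMetricSpace X) (x y : X) :
    ∃ c, IsGeodesicFromTo x y c := by
  obtain ⟨c, h0, h1, h⟩ := hgeo x y
  exact ⟨fun t => c t, h0, h1, fun s t => (h s s.2 t t.2).trans (mul_comm _ _)⟩

lemma exists_midpoint (hgeo : GeodesicMetricSpace X) (a b : X) :
    ∃ m, dist m a = dist a b / 2 ∧ dist m b = dist a b / 2 := by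
  obtain ⟨c, rfl, rfl, h⟩ := hgeo a b
  refine ⟨c (1 / 2), ?_, ?_⟩ <;> rw [h _ (by norm_num) _ (by norm_num)] <;> norm_num <;> ring

end GeodesicMetricSpace

namespace IsGeodesicFromTo

variable {x y : X} {c e : Icc (0 : ℝ) 1 → X}

lemma mem_divisionPoints (hc : IsGeodesicFromTo x y c) (t : Icc (0 : ℝ) 1) :
    c t ∈ divisionPoints x y t := by
  have hx := hc.2.2 ⟨0, by norm_num⟩ t
  have hy := hc.2.2 ⟨1, by norm_num⟩ t
  rw [hc.1, zero_sub, abs_neg, abs_of_nonneg t.2.1] at hx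
  rw [hc.2.1, abs_of_nonneg (sub_nonneg.2 t.2.2)] at hy
  exact ⟨hx, hy⟩

lemma IccExtend_mem_divisionPoints (hc : IsGeodesicFromTo x y c) {t : ℝ}
    (ht : t ∈ Icc (0 : ℝ) 1) : IccExtend zero_le_one c t ∈ divisionPoints x y t := by
  rw [IccExtend_of_mem _ _ ht]
  exact hc.mem_divisionPoints ⟨t, ht⟩

lemma lipschitzWith (hc : IsGeodesicFromTo x y c) : LipschitzWith (nndist x y) c :=
  .of_dist_le_mul fun s t => by rw [hc.2.2, mul_comm]; rfl

lemma lipschitzWith_IccExtend (hc : IsGeodesicFromTo x y c) :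
    LipschitzWith (nndist x y) (IccExtend zero_le_one c) := by
  simpa [IccExtend] using hc.lipschitzWith.comp (LipschitzWith.projIcc zero_le_one)

theorem unique [TopologicalSpace.SeparableSpace X] (hPT : Ptolemaic X)
    (hgeo : GeodesicMetricSpace X) (hc : IsGeodesicFromTo x y c) (he : IsGeodesicFromTo x y e) :
    c = e := by
  set γ := IccExtend zero_le_one c with hγ
  set δ := IccExtend zero_le_one e with hδ
  have hγL : LipschitzWith (nndist x y) γ := hc.lipschitzWith_IccExtend
  have hδL : LipschitzWith (nndist x y) δ := he.lipschitzWith_IccExtend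
  have hae : γ =ᵐ[MeasureTheory.volume] δ := by
    have hG := (LipschitzWith.dist.comp (hγL.prodMk hδL)).ae_differentiableAt_real
    filter_upwards [hPT.ae_differentiableAt_dist hγL, hPT.ae_differentiableAt_dist hδL, hG]
      with u hcu heu hGu
    obtain hu0 | hu0 := le_or_gt u 0
    · rw [hγ, hδ, IccExtend_of_le_left _ _ hu0, IccExtend_of_le_left _ _ hu0, hc.1, he.1]
    obtain hu1 | hu1 := le_or_gt 1 u
    · rw [hγ, hδ, IccExtend_of_right_le _ _ hu1, IccExtend_of_right_le _ _ hu1, hc.2.1, he.2.1]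
    by_contra hne
    have hpos : 0 < dist (γ u) (δ u) / 2 := half_pos (dist_pos.2 hne)
    obtain ⟨m, hmc, hme⟩ := hgeo.exists_midpoint (γ u) (δ u)
    exact hne (hPT.eq_of_differentiableAt_dist_midpoint
      (fun _ => hc.IccExtend_mem_divisionPoints) (fun _ => he.IccExtend_mem_divisionPoints)
      ⟨hu0, hu1⟩ hmc hme (hcu m (dist_pos.1 (hmc ▸ hpos))) (heu m (dist_pos.1 (hme ▸ hpos))) hGu)
  have hext : γ = δ := (hγL.continuous.ae_eq_iff_eq _ hδL.continuous).1 hae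
  funext t
  simpa only [hγ, hδ, IccExtend_val] using congrFun hext t

lemma of_tendsto {ι : Type*} {l : Filter ι} [l.NeBot] {a b : ι → X}
    {γ : ι → Icc (0 : ℝ) 1 → X} (hγ : ∀ i, IsGeodesicFromTo (a i) (b i) (γ i))
    (ha : Tendsto a l (𝓝 x)) (hb : Tendsto b l (𝓝 y))
    (hlim : ∀ t, Tendsto (fun i => γ i t) l (𝓝 (c t))) : IsGeodesicFromTo x y c := by
  refine ⟨tendsto_nhds_unique (hlim _) (ha.congr fun i => (hγ i).1.symm),
    tendsto_nhds_unique (hlim _) (hb.congr fun i => (hγ i).2.1.symm), fun s t => ?_⟩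
  exact tendsto_nhds_unique ((hlim s).dist (hlim t))
    (((ha.dist hb).const_mul _).congr fun i => ((hγ i).2.2 s t).symm)

lemma continuous_apply [ProperSpace X] {F : X → X → Icc (0 : ℝ) 1 → X}
    (hF : ∀ x y, IsGeodesicFromTo x y (F x y))
    (huniq : ∀ x y c, IsGeodesicFromTo x y c → c = F x y) (t : Icc (0 : ℝ) 1) :
    Continuous fun p : X × X => F p.1 p.2 t := by
  refine continuous_iff_ultrafilter.2 fun ⟨x, y⟩ U hU => ?_
  have hx : Tendsto Prod.fst U (𝓝 x) := (continuous_fst.tendsto (x, y)).mono_left hU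
  have hy : Tendsto Prod.snd U (𝓝 y) := (continuous_snd.tendsto (x, y)).mono_left hU
  have hlim : ∀ s, ∃ z, Tendsto (fun p : X × X => F p.1 p.2 s) U (𝓝 z) := fun s => by
    have hbound : Tendsto (fun p : X × X => dist x p.1 + s * dist p.1 p.2) U
        (𝓝 (dist x x + s * dist x y)) :=
      (tendsto_const_nhds.dist hx).add ((hx.dist hy).const_mul _)
    refine exists_tendsto_of_isBoundedUnder_dist (x := x)
      (hbound.isBoundedUnder_le.mono_le (.of_forall fun p => ?_))
    exact (dist_triangle x p.1 _).trans_eq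
      (congrArg _ ((hF p.1 p.2).mem_divisionPoints s).1)
  choose c hc using hlim
  have hgeo : IsGeodesicFromTo x y c := of_tendsto (fun p : X × X => hF p.1 p.2) hx hy hc
  exact huniq x y c hgeo ▸ hc t

lemma continuous_uncurry [ProperSpace X] {F : X → X → Icc (0 : ℝ) 1 → X}
    (hF : ∀ x y, IsGeodesicFromTo x y (F x y))
    (huniq : ∀ x y c, IsGeodesicFromTo x y c → c = F x y) :
    Continuous fun p : X × X × Icc (0 : ℝ) 1 => F p.1 p.2.1 p.2.2 := by
  refine continuous_iff_continuousAt.2 fun ⟨x, y, t⟩ => ?_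
  have hfixed : Tendsto (fun p : X × X × Icc (0 : ℝ) 1 => F p.1 p.2.1 t) (𝓝 (x, y, t))
      (𝓝 (F x y t)) :=
    ((continuous_apply hF huniq t).comp
      (continuous_fst.prodMk (continuous_fst.comp continuous_snd))).tendsto (x, y, t)
  refine (tendsto_iff_of_dist ?_).1 hfixed
  simp only [(hF _ _).2.2]
  have hcont : Continuous fun p : X × X × Icc (0 : ℝ) 1 =>
      |(t : ℝ) - p.2.2| * dist p.1 p.2.1 := by fun_prop
  simpa using hcont.tendsto (x, y, t)

end IsGeodesicFromTo

end PtolemaicSpace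

/-- **Unique geodesics, depending continuously on their endpoints, in a proper
geodesic PT space.** -/
theorem unique_geodesics_continuous_dependence
    (X : Type*) [MetricSpace X] [ProperSpace X]
    (hPT : Ptolemaic X) (hgeo : GeodesicMetricSpace X) :
    ∃ F : X → X → Set.Icc (0:ℝ) 1 → X,
      Continuous (fun p : X × X × Set.Icc (0:ℝ) 1 => F p.1 p.2.1 p.2.2) ∧
      ∀ x y : X, IsGeodesicFromTo x y (F x y) ∧
        ∀ c : Set.Icc (0:ℝ) 1 → X, IsGeodesicFromTo x y c → c = F x y := by
  choose F hF using hgeo.exists_isGeodesicFromTo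
  have huniq : ∀ x y c, IsGeodesicFromTo x y c → c = F x y :=
    fun x y _ hc => hc.unique hPT hgeo (hF x y)
  exact ⟨F, IsGeodesicFromTo.continuous_uncurry hF huniq, fun x y => ⟨hF x y, huniq x y⟩⟩
end

section
/- Let X be a proper geodesic ptolemaic metric space and suppose there is a homeomorphism h : ℝ × [0,1] → X together with two unit-speed geodesic lines c₀, c₁ : ℝ → X that are parallel and whose images are h(ℝ × {0}) and h(ℝ × {1}) respectively. Then for every x ∈ X there exists a unique unit-speed geodesic line c_x : ℝ → X with c_x(0) = x that is parallel to c₀. -/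
open Metric Set Filter Topology

/-- A unit-speed geodesic line: an isometric embedding of ℝ. -/
def IsGeodesicLine {X : Type*} [MetricSpace X] (c : ℝ → X) : Prop :=
  ∀ s t : ℝ, dist (c s) (c t) = |s - t|

/-- Two lines are parallel if their distance is sublinear in both directions. -/
def ParallelLines {X : Type*} [MetricSpace X] (c₀ c₁ : ℝ → X) : Prop :=
  Filter.Tendsto (fun t => dist (c₀ t) (c₁ t) / |t|) Filter.atTop (nhds 0) ∧
  Filter.Tendsto (fun t => dist (c₀ t) (c₁ t) / |t|) Filter.atBot (nhds 0)

/-!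
By Ptolemy's inequality the Busemann functions `b⁺`, `b⁻` of the two ends of `c₀` are convex along
geodesics. Their sum is nonnegative, and it vanishes on `c₁` because `c₁` is parallel to `c₀`. The
convex set `{b⁺ + b⁻ ≤ 0}` is the whole strip: it contains both boundary lines, its compact convex
pieces are contractible, and a contractible set which reaches around a point of the strip must
contain that point, by a winding number argument. As `b⁺ = -b⁻`, the co-rays from a point to the two
ends of `c₀` fit together to a line, on which `b⁻` grows at unit speed.

The level sets of `b⁻` are convex, and, again by a winding number argument, each of them is the
geodesic segment between its points on `c₀` and `c₁`. Hence these lines stay about as close to `c₀`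
as `c₁` does, and are parallel to it.

For uniqueness let `w t` be the distance at time `t` of two parallels through the same point `x`.
The line from the midpoint at time `t` reaches the segment at time `t + k`, and Ptolemy's inequality
with apex `x` yields `w t * k / t ≤ w (t + k) + w (t - k) - 2 * w t + O(k ^ 2)`. A nonzero function
`w ≥ 0` of sublinear growth with `w 0 = 0` violates this where its graph touches a line from below.
-/

/-- `z` lies metrically between `x` and `y`; in a geodesic space this says that some geodesic from
`x` to `y` passes through `z`. -/
def MetricBtw {X : Type*} [MetricSpace X] (x z y : X) : Prop :=
  dist x z + dist z y = dist x y

/-- A geodesically convex set: it contains every point metrically between two of its points. -/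
def GeodesicallyConvex {X : Type*} [MetricSpace X] (S : Set X) : Prop :=
  ∀ x ∈ S, ∀ y ∈ S, ∀ z, MetricBtw x z y → z ∈ S

/-- A function which is convex along geodesics; the convexity inequality is multiplied by
`dist x y` in order to avoid a division. -/
def GeodesicallyConvexFun {X : Type*} [MetricSpace X] (f : X → ℝ) : Prop :=
  ∀ x z y : X, MetricBtw x z y → dist x y * f z ≤ dist z y * f x + dist x z * f y

section Convexity

variable {X : Type*} [MetricSpace X] {f g : X → ℝ} {S T : Set X} {x y z : X} {r : ℝ}

lemma Ptolemaic.geodesicallyConvexFun_dist (hX : Ptolemaic X) (w : X) :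
    GeodesicallyConvexFun fun y => dist y w := fun x z y _ => by
  have := hX x y z w
  rw [dist_comm y z] at this
  simp only
  linarith

lemma GeodesicallyConvexFun.le_of_le (hf : GeodesicallyConvexFun f) (hz : MetricBtw x z y)
    (hx : f x ≤ r) (hy : f y ≤ r) : f z ≤ r := by
  have hfz := hf x z y hz
  have hrx := mul_le_mul_of_nonneg_left hx (dist_nonneg (x := z) (y := y))
  have hry := mul_le_mul_of_nonneg_left hy (dist_nonneg (x := x) (y := z))
  unfold MetricBtw at hz
  rcases (dist_nonneg (x := x) (y := y)).eq_or_lt with hxy | hxy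
  · have hxz : dist x z = 0 := le_antisymm (by linarith [dist_nonneg (x := z) (y := y)]) dist_nonneg
    rwa [← dist_eq_zero.1 hxz]
  · rw [← hz] at hfz hxy
    exact le_of_mul_le_mul_left (by linarith) hxy

lemma GeodesicallyConvexFun.geodesicallyConvex_le (hf : GeodesicallyConvexFun f) (r : ℝ) :
    GeodesicallyConvex {x | f x ≤ r} :=
  fun _ hx _ hy _ hz => hf.le_of_le hz hx hy

lemma GeodesicallyConvexFun.geodesicallyConvex_lt (hf : GeodesicallyConvexFun f) (r : ℝ) :
    GeodesicallyConvex {x | f x < r} :=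
  fun _ hx _ hy _ hz =>
    (hf.le_of_le hz (le_max_left _ _) (le_max_right _ _)).trans_lt (max_lt hx hy)

lemma GeodesicallyConvexFun.add (hf : GeodesicallyConvexFun f) (hg : GeodesicallyConvexFun g) :
    GeodesicallyConvexFun fun x => f x + g x := fun x z y hz => by
  simp only
  linarith [hf x z y hz, hg x z y hz]

lemma Ptolemaic.geodesicallyConvex_closedBall (hX : Ptolemaic X) (w : X) (r : ℝ) :
    GeodesicallyConvex (closedBall w r) :=
  (hX.geodesicallyConvexFun_dist w).geodesicallyConvex_le r

lemma GeodesicallyConvex.inter (hS : GeodesicallyConvex S) (hT : GeodesicallyConvex T) :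
    GeodesicallyConvex (S ∩ T) :=
  fun x hx y hy z hz => ⟨hS x hx.1 y hy.1 z hz, hT x hx.2 y hy.2 z hz⟩

end Convexity

section Geodesics

variable {X : Type*} [MetricSpace X] {x y : X} {a b s t : ℝ}

lemma GeodesicMetricSpace.exists_lipschitz_path (hX : GeodesicMetricSpace X) (x y : X) :
    ∃ g : ℝ → X, LipschitzWith 1 g ∧ g 0 = x ∧ g (dist x y) = y := by
  obtain ⟨c, hc0, hc1, hc⟩ := hX x y
  refine ⟨fun s => c (projIcc (0 : ℝ) 1 zero_le_one (s / dist x y)), ?_, by simpa, ?_⟩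
  · refine LipschitzWith.of_dist_le_mul fun s t => ?_
    calc dist (c _) (c _) = dist x y * |(projIcc (0 : ℝ) 1 zero_le_one (s / dist x y) : ℝ)
          - projIcc (0 : ℝ) 1 zero_le_one (t / dist x y)| :=
          hc _ (Subtype.coe_prop _) _ (Subtype.coe_prop _)
      _ ≤ dist x y * |s / dist x y - t / dist x y| :=
          mul_le_mul_of_nonneg_left (abs_projIcc_sub_projIcc zero_le_one) dist_nonneg
      _ = dist x y / dist x y * |s - t| := by
          rw [← sub_div, abs_div, abs_of_nonneg (dist_nonneg (x := x) (y := y))]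
          ring
      _ ≤ ((1 : NNReal) : ℝ) * dist s t := by
          rw [Real.dist_eq]
          exact mul_le_mul_of_nonneg_right (div_self_le_one _) (abs_nonneg _)
  · rcases eq_or_ne x y with rfl | hxy
    · simpa
    · simpa [div_self (dist_ne_zero.2 hxy)]

lemma dist_eq_sub_of_lipschitz {g : ℝ → X} (hg : LipschitzWith 1 g)
    (hab : dist (g a) (g b) = b - a) (has : a ≤ s) (hst : s ≤ t) (htb : t ≤ b) :
    dist (g s) (g t) = t - s := by
  have hle : ∀ {u v : ℝ}, u ≤ v → dist (g u) (g v) ≤ v - u := fun {u v} huv => by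
    simpa [Real.dist_eq, abs_sub_comm u v, abs_of_nonneg (sub_nonneg.2 huv)]
      using hg.dist_le_mul u v
  linarith [hle has, hle hst, hle htb, dist_triangle4 (g a) (g s) (g t) (g b)]

lemma metricBtw_of_lipschitz {g : ℝ → X} (hg : LipschitzWith 1 g)
    (hab : dist (g a) (g b) = b - a) (ht : t ∈ Icc a b) : MetricBtw (g a) (g t) (g b) := by
  rw [MetricBtw, dist_eq_sub_of_lipschitz hg hab le_rfl ht.1 ht.2,
    dist_eq_sub_of_lipschitz hg hab ht.1 ht.2 le_rfl, hab]
  ring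

lemma GeodesicMetricSpace.exists_isPreconnected_subset (hX : GeodesicMetricSpace X) (x y : X) :
    ∃ C : Set X, IsPreconnected C ∧ x ∈ C ∧ y ∈ C ∧ ∀ z ∈ C, MetricBtw x z y := by
  obtain ⟨g, hg, rfl, hy⟩ := hX.exists_lipschitz_path x y
  have hD : 0 ≤ dist (g 0) y := dist_nonneg
  refine ⟨g '' Icc 0 (dist (g 0) y), isPreconnected_Icc.image g hg.continuous.continuousOn,
    ⟨0, ⟨le_rfl, hD⟩, rfl⟩, ⟨_, ⟨hD, le_rfl⟩, hy⟩, ?_⟩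
  rintro _ ⟨t, ht, rfl⟩
  have := metricBtw_of_lipschitz hg (by rw [hy, sub_zero]) ht
  rwa [hy] at this

lemma GeodesicallyConvex.isPreconnected {S : Set X} (hS : GeodesicallyConvex S)
    (hX : GeodesicMetricSpace X) : IsPreconnected S :=
  isPreconnected_of_forall_pair fun x hx y hy =>
    let ⟨C, hC, hxC, hyC, hCS⟩ := hX.exists_isPreconnected_subset x y
    ⟨C, fun z hz => hS x hx y hy z (hCS z hz), hxC, hyC, hC⟩

end Geodesics

section Lines

variable {X : Type*} [MetricSpace X] {c c' c'' : ℝ → X}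

/-- The line `c` traversed backwards; its Busemann function belongs to the end `-∞` of `c`. -/
def reverseLine (c : ℝ → X) : ℝ → X := fun t => c (-t)

lemma IsGeodesicLine.isometry (hc : IsGeodesicLine c) : Isometry c :=
  Isometry.of_dist_eq fun s t => by rw [hc, Real.dist_eq]

lemma IsGeodesicLine.dist_of_le (hc : IsGeodesicLine c) {s t : ℝ} (hst : s ≤ t) :
    dist (c s) (c t) = t - s := by
  rw [hc, abs_sub_comm, abs_of_nonneg (sub_nonneg.2 hst)]

lemma IsGeodesicLine.metricBtw (hc : IsGeodesicLine c) {s t u : ℝ} (hst : s ≤ t) (htu : t ≤ u) :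
    MetricBtw (c s) (c t) (c u) := by
  rw [MetricBtw, hc.dist_of_le hst, hc.dist_of_le htu, hc.dist_of_le (hst.trans htu)]
  ring

lemma IsGeodesicLine.reverse (hc : IsGeodesicLine c) : IsGeodesicLine (reverseLine c) :=
  fun s t => by rw [reverseLine, reverseLine, hc, neg_sub_neg, abs_sub_comm]

lemma ParallelLines.reverse (h : ParallelLines c c') :
    ParallelLines (reverseLine c) (reverseLine c') := by
  have htop := h.1.comp tendsto_neg_atBot_atTop
  have hbot := h.2.comp tendsto_neg_atTop_atBot
  simp only [Function.comp_def, abs_neg] at htop hbot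
  exact ⟨hbot, htop⟩

lemma ParallelLines.symm (h : ParallelLines c c') : ParallelLines c' c := by
  simpa only [ParallelLines, dist_comm] using h

lemma ParallelLines.trans (h : ParallelLines c c') (h' : ParallelLines c' c'') :
    ParallelLines c c'' := by
  have hle : ∀ t : ℝ, dist (c t) (c'' t) / |t| ≤
      dist (c t) (c' t) / |t| + dist (c' t) (c'' t) / |t| := fun t => by
    rw [← add_div]
    gcongr
    exact dist_triangle _ _ _
  constructor
  · exact squeeze_zero (fun t => by positivity) hle (by simpa using h.1.add h'.1)
  · exact squeeze_zero (fun t => by positivity) hle (by simpa using h.2.add h'.2)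

lemma ParallelLines.of_dist_le {d d' : ℝ → X} (h : ParallelLines c c') {M : ℝ}
    (hle : ∀ t, dist (d t) (d' t) ≤ M + dist (c t) (c' t)) : ParallelLines d d' := by
  have hdiv : ∀ t : ℝ, dist (d t) (d' t) / |t| ≤ M / |t| + dist (c t) (c' t) / |t| := fun t => by
    rw [← add_div]
    gcongr
    exact hle t
  constructor
  · refine squeeze_zero (fun t => by positivity) hdiv ?_
    simpa using (tendsto_const_nhds.div_atTop tendsto_abs_atTop_atTop).add h.1
  · refine squeeze_zero (fun t => by positivity) hdiv ?_
    simpa using (tendsto_const_nhds.div_atTop tendsto_abs_atBot_atTop).add h.2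

lemma GeodesicallyConvexFun.convexOn_comp_line {f : X → ℝ} (hf : GeodesicallyConvexFun f)
    (hc : IsGeodesicLine c) : ConvexOn ℝ univ (f ∘ c) := by
  refine LinearOrder.convexOn_of_lt convex_univ fun s _ t _ hst a b ha hb hab => ?_
  simp only [smul_eq_mul, Function.comp]
  have hs : s ≤ a * s + b * t := by
    rw [← sub_nonneg, show a * s + b * t - s = b * (t - s) by linear_combination s * hab]
    exact mul_nonneg hb.le (sub_nonneg.2 hst.le)
  have ht : a * s + b * t ≤ t := by
    rw [← sub_nonneg, show t - (a * s + b * t) = a * (t - s) by linear_combination -t * hab]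
    exact mul_nonneg ha.le (sub_nonneg.2 hst.le)
  have h := hf _ _ _ (hc.metricBtw hs ht)
  rw [hc.dist_of_le hs, hc.dist_of_le ht, hc.dist_of_le hst.le] at h
  refine le_of_mul_le_mul_left (h.trans_eq ?_) (sub_pos.2 hst)
  linear_combination (s * f (c t) - t * f (c s)) * hab

end Lines

section ConvexSublinear

variable {g : ℝ → ℝ}

lemma antitone_of_convexOn_of_tendsto_div (hg : ConvexOn ℝ univ g)
    (hlim : Tendsto (fun t => g t / t) atTop (𝓝 0)) : Antitone g := by
  intro s t hst
  rcases hst.eq_or_lt with rfl | hst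
  · exact le_rfl
  have hinv : ∀ r : ℝ, Tendsto (fun N : ℝ => r / N) atTop (𝓝 0) := fun r =>
    tendsto_const_nhds.div_atTop tendsto_id
  have hslope : Tendsto (fun N => (g N - g s) / (N - s)) atTop (𝓝 0) := by
    have h := (hlim.sub (hinv (g s))).div ((hinv s).const_sub 1) (by norm_num)
    rw [sub_zero, zero_div] at h
    refine h.congr' ?_
    filter_upwards [eventually_gt_atTop 0] with N hN
    rw [Pi.div_apply, ← sub_div, one_sub_div hN.ne', div_div_div_cancel_right₀ hN.ne']
  have hle : (g t - g s) / (t - s) ≤ 0 := by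
    refine ge_of_tendsto hslope ?_
    filter_upwards [eventually_ge_atTop t] with N hN
    exact hg.secant_mono trivial trivial trivial hst.ne' (hst.trans_le hN).ne' hN
  have := (div_le_iff₀ (sub_pos.2 hst)).1 hle
  linarith

lemma eq_of_convexOn_of_tendsto_div (hg : ConvexOn ℝ univ g)
    (htop : Tendsto (fun t => g t / t) atTop (𝓝 0))
    (hbot : Tendsto (fun t => g t / t) atBot (𝓝 0)) (s t : ℝ) : g s = g t := by
  wlog hst : s ≤ t generalizing s t
  · exact (this t s (le_of_not_ge hst)).symm
  have hneg : ConvexOn ℝ univ fun t => g (-t) := hg.comp_linearMap (-LinearMap.id)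
  have hlim : Tendsto (fun t => g (-t) / t) atTop (𝓝 0) := by
    have := (hbot.comp tendsto_neg_atTop_atBot).neg
    simpa [Function.comp_def, div_neg] using this
  refine le_antisymm ?_ (antitone_of_convexOn_of_tendsto_div hg htop hst)
  simpa using antitone_of_convexOn_of_tendsto_div hneg hlim (neg_le_neg hst)

end ConvexSublinear

section Busemann

variable {X : Type*} [MetricSpace X] {c c' : ℝ → X}

/-- The Busemann function of the line `c` at its end `+∞`, written as an infimum rather than a
limit: along a geodesic line `dist y (c t) - t` is nonincreasing in `t`. -/
noncomputable def busemann (c : ℝ → X) (y : X) : ℝ := ⨅ t, (dist y (c t) - t)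

namespace IsGeodesicLine

lemma bddBelow_dist_sub (hc : IsGeodesicLine c) (y : X) :
    BddBelow (range fun t => dist y (c t) - t) := by
  refine ⟨-dist y (c 0), ?_⟩
  rintro _ ⟨t, rfl⟩
  have h := dist_triangle (c 0) y (c t)
  rw [hc, dist_comm (c 0) y, zero_sub, abs_neg] at h
  linarith [le_abs_self t]

lemma busemann_le (hc : IsGeodesicLine c) (y : X) (t : ℝ) : busemann c y ≤ dist y (c t) - t :=
  ciInf_le (hc.bddBelow_dist_sub y) t

lemma tendsto_busemann (hc : IsGeodesicLine c) (y : X) :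
    Tendsto (fun t => dist y (c t) - t) atTop (𝓝 (busemann c y)) := by
  refine tendsto_atTop_ciInf (fun s t hst => ?_) (hc.bddBelow_dist_sub y)
  have h := dist_triangle y (c s) (c t)
  rw [hc.dist_of_le hst] at h
  linarith

lemma busemann_le_add_dist (hc : IsGeodesicLine c) (x y : X) :
    busemann c x ≤ busemann c y + dist x y :=
  le_of_tendsto_of_tendsto' (hc.tendsto_busemann x) ((hc.tendsto_busemann y).add_const _)
    fun t => by linarith [dist_triangle x y (c t)]

lemma continuous_busemann (hc : IsGeodesicLine c) : Continuous (busemann c) :=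
  (LipschitzWith.of_le_add hc.busemann_le_add_dist).continuous

lemma busemann_apply_self (hc : IsGeodesicLine c) (s : ℝ) : busemann c (c s) = -s := by
  refine le_antisymm (by simpa using hc.busemann_le (c s) s) (le_ciInf fun t => ?_)
  rw [hc]
  linarith [neg_abs_le (s - t)]

lemma busemann_reverse_apply_self (hc : IsGeodesicLine c) (s : ℝ) :
    busemann (reverseLine c) (c s) = s := by
  simpa [reverseLine] using hc.reverse.busemann_apply_self (-s)

lemma geodesicallyConvexFun_busemann (hc : IsGeodesicLine c) (hX : Ptolemaic X) :
    GeodesicallyConvexFun (busemann c) := fun x z y hz => by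
  refine le_of_tendsto_of_tendsto' ((hc.tendsto_busemann z).const_mul (dist x y))
    (((hc.tendsto_busemann x).const_mul (dist z y)).add
      ((hc.tendsto_busemann y).const_mul (dist x z))) fun t => ?_
  have h := hX.geodesicallyConvexFun_dist (c t) x z y hz
  have ht : (dist x z + dist z y) * t = dist x y * t := by rw [hz]
  simp only at h
  linarith

lemma busemann_add_busemann_reverse_nonneg (hc : IsGeodesicLine c) (y : X) :
    0 ≤ busemann c y + busemann (reverseLine c) y := by
  refine ge_of_tendsto' ((hc.tendsto_busemann y).add (hc.reverse.tendsto_busemann y)) fun t => ?_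
  have h := dist_triangle (c t) y (c (-t))
  rw [hc, dist_comm (c t) y] at h
  simp only [reverseLine]
  linarith [le_abs_self (t - -t)]

end IsGeodesicLine

namespace ParallelLines

lemma busemann_apply (h : ParallelLines c c') (hX : Ptolemaic X) (hc : IsGeodesicLine c)
    (hc' : IsGeodesicLine c') (s : ℝ) : busemann c (c' s) = busemann c (c' 0) - s := by
  have hbound : ∀ t, |(busemann c (c' t) + t) / t| ≤ dist (c t) (c' t) / |t| := fun t => by
    rw [abs_div]
    gcongr
    have h₁ := hc.busemann_le_add_dist (c t) (c' t)
    have h₂ := hc.busemann_le_add_dist (c' t) (c t)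
    rw [hc.busemann_apply_self] at h₁ h₂
    rw [dist_comm] at h₂
    exact abs_le.2 ⟨by linarith, by linarith⟩
  have hconvex : ConvexOn ℝ univ fun t => busemann c (c' t) + t :=
    ((hc.geodesicallyConvexFun_busemann hX).convexOn_comp_line hc').add (convexOn_id convex_univ)
  have := eq_of_convexOn_of_tendsto_div hconvex (squeeze_zero_norm hbound h.1)
    (squeeze_zero_norm hbound h.2) s 0
  linarith

lemma busemann_reverse_apply (h : ParallelLines c c') (hX : Ptolemaic X) (hc : IsGeodesicLine c)
    (hc' : IsGeodesicLine c') (s : ℝ) :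
    busemann (reverseLine c) (c' s) = busemann (reverseLine c) (c' 0) + s := by
  simpa [reverseLine] using h.reverse.busemann_apply hX hc.reverse hc'.reverse (-s)

/-- Ptolemy's inequality for `c 0, c T, c' T, c' 0` compares the product of the diagonals, which is
about `(T + α) * (T + β)` for the two Busemann values `α` and `β`, with `T * T + o(T)`. -/
lemma busemann_add_busemann_reverse_eq_zero (h : ParallelLines c c') (hX : Ptolemaic X)
    (hc : IsGeodesicLine c) (hc' : IsGeodesicLine c') (s : ℝ) :
    busemann c (c' s) + busemann (reverseLine c) (c' s) = 0 := by
  rw [h.busemann_apply hX hc hc', h.busemann_reverse_apply hX hc hc']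
  have hnonneg := hc.busemann_add_busemann_reverse_nonneg (c' 0)
  set α := busemann c (c' 0)
  set β := busemann (reverseLine c) (c' 0) with hβ_def
  have hlim : Tendsto (fun T : ℝ => α + β + α * β / T) atTop (𝓝 (α + β + 0)) :=
    tendsto_const_nhds.add (tendsto_const_nhds.div_atTop tendsto_id)
  have hle := le_of_tendsto_of_tendsto hlim (h.1.const_mul (dist (c' 0) (c 0))) <| by
    filter_upwards [eventually_gt_atTop 0, eventually_gt_atTop (-β)] with T hT hTβ
    have hα : T + α ≤ dist (c' 0) (c T) := by linarith [hc.busemann_le (c' 0) T]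
    have hβ : T + β ≤ dist (c' T) (c 0) := by
      have := hc.reverse.busemann_le (c' T) 0
      rw [h.busemann_reverse_apply hX hc hc', ← hβ_def, reverseLine, neg_zero] at this
      linarith
    have hptolemy := hX (c' 0) (c T) (c' T) (c 0)
    have hmul := mul_le_mul hα hβ (by linarith) dist_nonneg
    rw [hc'.dist_of_le hT.le, dist_comm (c T), hc.dist_of_le hT.le] at hptolemy
    rw [abs_of_pos hT, ← mul_div_assoc, show α + β + α * β / T = ((α + β) * T + α * β) / T by
      field_simp]
    gcongr
    linarith
  rw [mul_zero, add_zero] at hle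
  linarith

end ParallelLines

end Busemann

section Midpoints

variable {X : Type*} [MetricSpace X] {x m y : X}

/-- `m` is a midpoint of `x` and `y`. -/
def MetricMidpoint {X : Type*} [MetricSpace X] (x m y : X) : Prop :=
  dist x m = dist x y / 2 ∧ dist m y = dist x y / 2

lemma MetricMidpoint.metricBtw (h : MetricMidpoint x m y) : MetricBtw x m y := by
  rw [MetricBtw, h.1, h.2, add_halves]

lemma GeodesicallyConvexFun.apply_midpoint_le {f : X → ℝ} (hf : GeodesicallyConvexFun f)
    (h : MetricMidpoint x m y) : f m ≤ (f x + f y) / 2 := by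
  rcases (dist_nonneg (x := x) (y := y)).eq_or_lt with hxy | hxy
  · have hxm : dist x m = 0 := by rw [h.1, ← hxy, zero_div]
    rw [← dist_eq_zero.1 hxy.symm, ← dist_eq_zero.1 hxm, add_self_div_two]
  · have := hf x m y h.metricBtw
    rw [h.1, h.2] at this
    exact le_of_mul_le_mul_left (by linarith) hxy

lemma Ptolemaic.sq_dist_midpoint_le (hX : Ptolemaic X) (h : MetricMidpoint x m y) (w : X) :
    dist m w ^ 2 ≤ (dist x w ^ 2 + dist y w ^ 2) / 2 - (dist x w - dist y w) ^ 2 / 4 :=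
  calc dist m w ^ 2 ≤ ((dist x w + dist y w) / 2) ^ 2 := by
        gcongr
        exact (hX.geodesicallyConvexFun_dist w).apply_midpoint_le h
    _ = _ := by ring

lemma GeodesicMetricSpace.exists_midpoint_s19 (hX : GeodesicMetricSpace X) (x y : X) :
    ∃ m, MetricMidpoint x m y := by
  obtain ⟨g, hg, rfl, hy⟩ := hX.exists_lipschitz_path x y
  set D := dist (g 0) y
  have hD : 0 ≤ D := dist_nonneg
  have h0D : dist (g 0) (g D) = D - 0 := by rw [hy, sub_zero]
  refine ⟨g (D / 2), ?_, ?_⟩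
  · rw [dist_eq_sub_of_lipschitz hg h0D le_rfl (by linarith) (by linarith), sub_zero]
  · rw [← hy, dist_eq_sub_of_lipschitz hg h0D (by linarith) (by linarith) le_rfl, hy]
    ring

end Midpoints

section Contractibility

/-- A continuous function that is strictly convex at midpoints; it serves as the penalty which makes
the minimizers contracting a compact ptolemaic space unique. -/
structure StrictPenalty {X : Type*} [MetricSpace X] (F : X → ℝ) : Prop where
  continuous : Continuous F
  lt_of_ne : ∀ x m y : X, x ≠ y → MetricMidpoint x m y → F m < (F x + F y) / 2

variable {Y : Type*} [MetricSpace Y]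

lemma Ptolemaic.exists_strictPenalty [CompactSpace Y] (hY : Ptolemaic Y) :
    ∃ F : Y → ℝ, StrictPenalty F := by
  cases isEmpty_or_nonempty Y
  · exact ⟨fun _ => 0, continuous_const, fun x => isEmptyElim x⟩
  let e := TopologicalSpace.denseSeq Y
  let u : ℕ → Y → ℝ := fun n y => (1 / 2) ^ n * dist y (e n) ^ 2
  obtain ⟨R, hR⟩ : ∃ R, ∀ y z : Y, dist y z ≤ R :=
    let ⟨R, hR⟩ := isBounded_iff.1 (isCompact_univ (X := Y)).isBounded
    ⟨R, fun _ _ => hR trivial trivial⟩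
  have hbound : ∀ n y, ‖u n y‖ ≤ (1 / 2) ^ n * R ^ 2 := fun n y => by
    rw [Real.norm_of_nonneg (by positivity)]
    have := hR y (e n)
    simp only [u]
    gcongr
  have hsummable : Summable fun n : ℕ => (1 / 2 : ℝ) ^ n * R ^ 2 :=
    summable_geometric_two.mul_right _
  have hu : ∀ y, Summable fun n => u n y := fun y =>
    hsummable.of_norm_bounded (hbound · y)
  refine ⟨fun y => ∑' n, u n y, continuous_tsum (fun n => by fun_prop) hsummable hbound,
    fun x m y hxy hm => ?_⟩
  have hmid : ∀ n,
      u n m ≤ (u n x + u n y) / 2 - (1 / 2) ^ n * ((dist x (e n) - dist y (e n)) ^ 2 / 4) :=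
    fun n => by
      have := mul_le_mul_of_nonneg_left (hY.sq_dist_midpoint_le hm (e n))
        (by positivity : (0 : ℝ) ≤ (1 / 2) ^ n)
      simp only [u]
      linarith
  obtain ⟨n, hn⟩ : ∃ n, dist x (e n) < dist y (e n) :=
    (TopologicalSpace.denseRange_denseSeq Y).exists_mem_open
      (isOpen_lt (continuous_const.dist continuous_id) (continuous_const.dist continuous_id) :
        IsOpen {z | dist x z < dist y z}) ⟨x, by simpa using hxy.symm⟩
  rw [← (hu x).tsum_add (hu y), ← tsum_div_const]
  refine Summable.tsum_lt_tsum (i := n) (fun k => ?_) ?_ (hu m) (((hu x).add (hu y)).div_const 2)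
  · have : 0 ≤ (1 / 2 : ℝ) ^ k * ((dist x (e k) - dist y (e k)) ^ 2 / 4) := by positivity
    linarith [hmid k]
  · have : 0 < (1 / 2 : ℝ) ^ n * ((dist x (e n) - dist y (e n)) ^ 2 / 4) := by
      have := sub_ne_zero.2 hn.ne
      positivity
    linarith [hmid n]

lemma exists_continuousMap_minimizer {T Z : Type*} [TopologicalSpace T] [TopologicalSpace Z]
    [CompactSpace Z] [Nonempty Z] {φ : T → Z → ℝ} (hφ : Continuous (Function.uncurry φ))
    (hunique : ∀ t w₁ w₂, (∀ w, φ t w₁ ≤ φ t w) → (∀ w, φ t w₂ ≤ φ t w) → w₁ = w₂) :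
    ∃ m : C(T, Z), ∀ t w, φ t (m t) ≤ φ t w := by
  have hexists : ∀ t, ∃ w, ∀ w', φ t w ≤ φ t w' := fun t =>
    let ⟨w, _, hw⟩ := isCompact_univ.exists_isMinOn univ_nonempty
      (hφ.comp (Continuous.prodMk_right t)).continuousOn
    ⟨w, fun w' => hw trivial⟩
  choose m hm using hexists
  refine ⟨⟨m, continuous_iff_ultrafilter.2 fun t g hg => ?_⟩, hm⟩
  obtain ⟨w, -, hw⟩ := isCompact_iff_ultrafilter_le_nhds.1 isCompact_univ (g.map m) (by simp)
  have hid : Tendsto id (g : Filter T) (𝓝 t) := hg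
  have hmin : ∀ w', φ t w ≤ φ t w' := fun w' =>
    le_of_tendsto_of_tendsto' ((hφ.tendsto (t, w)).comp (hid.prodMk_nhds hw))
      ((hφ.tendsto (t, w')).comp (hid.prodMk_nhds tendsto_const_nhds)) fun s => hm s w'
  rwa [hunique t (m t) w (hm t) hmin]

/-- At time `t` the contraction moves `z` to the minimizer of `(1 - t) * dist w z + t * F w`. -/
theorem Ptolemaic.contractibleSpace [CompactSpace Y] [Nonempty Y] (hY : Ptolemaic Y)
    (hgeo : GeodesicMetricSpace Y) : ContractibleSpace Y := by
  obtain ⟨F, hF⟩ := hY.exists_strictPenalty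
  let φ : unitInterval × Y → Y → ℝ := fun p w => (1 - p.1) * dist w p.2 + p.1 * F w
  have hφ : Continuous (Function.uncurry φ) := by
    have := hF.continuous
    fun_prop
  have hunique : ∀ p w₁ w₂, (∀ w, φ p w₁ ≤ φ p w) → (∀ w, φ p w₂ ≤ φ p w) → w₁ = w₂ := by
    rintro ⟨t, z⟩ w₁ w₂ h₁ h₂
    rcases eq_or_ne t 0 with rfl | ht
    · have h₁ : dist w₁ z = 0 := le_antisymm (by simpa [φ] using h₁ z) dist_nonneg
      have h₂ : dist w₂ z = 0 := le_antisymm (by simpa [φ] using h₂ z) dist_nonneg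
      rw [dist_eq_zero.1 h₁, dist_eq_zero.1 h₂]
    · by_contra hne
      obtain ⟨m, hm⟩ := hgeo.exists_midpoint_s19 w₁ w₂
      have hdist := mul_le_mul_of_nonneg_left
        ((hY.geodesicallyConvexFun_dist z).apply_midpoint_le hm) (sub_nonneg.2 t.2.2)
      have hpenalty := mul_lt_mul_of_pos_left (hF.lt_of_ne w₁ m w₂ hne hm)
        (unitInterval.pos_iff_ne_zero.2 ht : (0 : ℝ) < t)
      have h₁ := h₁ m
      have h₂ := h₂ m
      simp only [φ] at h₁ h₂
      linarith
  obtain ⟨m, hm⟩ := exists_continuousMap_minimizer hφ hunique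
  obtain ⟨y₀⟩ := ‹Nonempty Y›
  refine (contractible_iff_id_nullhomotopic Y).2 ⟨m (1, y₀), ⟨⟨m, fun z => ?_, fun z => ?_⟩⟩⟩
  · refine hunique (0, z) _ z (hm _) fun w => ?_
    simp [φ]
  · exact hunique (1, z) _ _ (hm _) fun w => by simpa [φ] using hm (1, y₀) w

variable {X : Type*} [MetricSpace X] {K : Set X}

lemma Ptolemaic.subtype (hX : Ptolemaic X) (K : Set X) : Ptolemaic K :=
  fun x y z w => hX x y z w

lemma GeodesicallyConvex.geodesicMetricSpace (hK : GeodesicallyConvex K)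
    (hX : GeodesicMetricSpace X) : GeodesicMetricSpace K := by
  intro x y
  obtain ⟨c, hc0, hc1, hc⟩ := hX x y
  have h0 : (0 : ℝ) ∈ Icc (0 : ℝ) 1 := left_mem_Icc.2 zero_le_one
  have h1 : (1 : ℝ) ∈ Icc (0 : ℝ) 1 := right_mem_Icc.2 zero_le_one
  have hmem : ∀ t ∈ Icc (0 : ℝ) 1, c t ∈ K := fun t ht => by
    refine hK x x.2 y y.2 _ ?_
    have hxt := hc 0 h0 t ht
    have hty := hc t ht 1 h1
    rw [hc0, zero_sub, abs_neg, abs_of_nonneg ht.1] at hxt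
    rw [hc1, abs_sub_comm, abs_of_nonneg (sub_nonneg.2 ht.2)] at hty
    rw [MetricBtw, hxt, hty]
    ring
  refine ⟨fun t => ⟨c (projIcc 0 1 zero_le_one t), hmem _ (Subtype.coe_prop _)⟩, ?_, ?_, ?_⟩
  · simpa [projIcc_of_mem _ h0] using Subtype.ext hc0
  · simpa [projIcc_of_mem _ h1] using Subtype.ext hc1
  · intro s hs t ht
    simpa only [Subtype.dist_eq, projIcc_of_mem _ hs, projIcc_of_mem _ ht] using hc s hs t ht

lemma GeodesicallyConvex.contractibleSpace (hK : GeodesicallyConvex K) (hX : Ptolemaic X)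
    (hgeo : GeodesicMetricSpace X) (hcompact : IsCompact K) (hne : K.Nonempty) :
    ContractibleSpace K :=
  have := isCompact_iff_compactSpace.1 hcompact
  have := hne.to_subtype
  (hX.subtype K).contractibleSpace (hK.geodesicMetricSpace hgeo)

end Contractibility

section WindingNumber

variable {Y : Type*} [TopologicalSpace Y]

lemma exists_lift_of_isCoveringMap {E B : Type*} [TopologicalSpace E] [TopologicalSpace B]
    [ContractibleSpace Y] {p : E → B} (hp : IsCoveringMap p) (hsurj : Function.Surjective p)
    (f : C(Y, B)) : ∃ l : C(Y, E), ∀ y, p (l y) = f y := by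
  obtain ⟨y₀, ⟨H⟩⟩ := id_nullhomotopic Y
  obtain ⟨e, he⟩ := hsurj (f y₀)
  let G : C(unitInterval × Y, B) := f.comp H.symm.toContinuousMap
  have hG : ∀ y, G (0, y) = p (ContinuousMap.const Y e y) := fun y => by simp [G, he]
  refine ⟨(hp.liftHomotopy G _ hG).comp ((ContinuousMap.const Y 1).prodMk (.id Y)), fun y => ?_⟩
  have := congrFun (hp.liftHomotopy_lifts G _ hG) (1, y)
  simpa [G] using this

lemma exists_polar_coordinates [ContractibleSpace Y] {u v : Y → ℝ} (hu : Continuous u)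
    (hv : Continuous v) (huv : ∀ y, u y = 0 → v y ≠ 0) :
    ∃ ρ θ : Y → ℝ, Continuous θ ∧
      ∀ y, 0 < ρ y ∧ u y = ρ y * Real.cos (θ y) ∧ v y = ρ y * Real.sin (θ y) := by
  let f : C(Y, {z : ℂ // z ≠ 0}) :=
    ⟨fun y => ⟨u y + v y * Complex.I, fun h => huv y (by simpa using congrArg Complex.re h)
      (by simpa using congrArg Complex.im h)⟩, by fun_prop⟩
  obtain ⟨l, hl⟩ := exists_lift_of_isCoveringMap Complex.isCoveringMap_exp
    (fun z => ⟨Complex.log z, Subtype.ext (Complex.exp_log z.2)⟩) f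
  refine ⟨fun y => Real.exp (l y).re, fun y => (l y).im, by fun_prop, fun y =>
    ⟨Real.exp_pos _, ?_, ?_⟩⟩
  · rw [← Complex.exp_re, show Complex.exp (l y) = f y from congrArg Subtype.val (hl y)]
    simp [f]
  · rw [← Complex.exp_im, show Complex.exp (l y) = f y from congrArg Subtype.val (hl y)]
    simp [f]

lemma exists_abs_sub_le_of_cos_nonneg {S : Set Y} (hS : IsPreconnected S) {θ : Y → ℝ}
    (hθ : ContinuousOn θ S) (hcos : ∀ y ∈ S, 0 ≤ Real.cos (θ y)) :
    ∃ n : ℤ, ∀ y ∈ S, |θ y - n * (2 * Real.pi)| ≤ Real.pi / 2 := by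
  rcases S.eq_empty_or_nonempty with rfl | ⟨y₀, hy₀⟩
  · simp
  have hpi := Real.pi_pos
  set n := round (θ y₀ / (2 * Real.pi))
  have hn : |θ y₀ - n * (2 * Real.pi)| ≤ Real.pi := by
    have h := abs_sub_round (θ y₀ / (2 * Real.pi))
    rw [div_sub' (by positivity), abs_div, abs_of_pos (by positivity : 0 < 2 * Real.pi),
      div_le_iff₀ (by positivity)] at h
    rw [mul_comm]
    linarith
  have hgap : ∀ y ∈ S, |θ y - n * (2 * Real.pi)| ≤ Real.pi →
      |θ y - n * (2 * Real.pi)| ≤ Real.pi / 2 := fun y hy hle => by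
    by_contra! hlt
    have h := Real.cos_neg_of_pi_div_two_lt_of_lt hlt (by linarith)
    rw [Real.cos_abs, Real.cos_sub_int_mul_two_pi] at h
    exact h.not_ge (hcos y hy)
  refine ⟨n, fun y₁ hy₁ => hgap y₁ hy₁ ?_⟩
  by_contra! hlt
  obtain ⟨y, hy, hyπ⟩ := hS.intermediate_value hy₀ hy₁
    (hθ.sub continuousOn_const).abs ⟨hn, hlt.le⟩
  linarith [hyπ.symm.trans_le (hgap y hy hyπ.le)]

lemma eq_of_abs_sub_le_pi_div_two {m n : ℤ} {a b t : ℝ} (hab : b - a = Real.pi / 2)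
    (hm : |t - a - m * (2 * Real.pi)| ≤ Real.pi / 2)
    (hn : |t - b - n * (2 * Real.pi)| ≤ Real.pi / 2) : m = n := by
  have hpi := Real.pi_pos
  rw [abs_le] at hm hn
  have h₁ : ((m - n : ℤ) : ℝ) < 1 := by push_cast; nlinarith
  have h₂ : (-1 : ℝ) < ((m - n : ℤ) : ℝ) := by push_cast; nlinarith
  have h₁ : m - n < 1 := by exact_mod_cast h₁
  have h₂ : -1 < m - n := by exact_mod_cast h₂
  omega

/-- If `(u, v)` had no zero, the polar angle would be a continuous function, and it would increase
by a quarter turn at each of the four corners of the quadrilateral with sides `R`, `T`, `L`, `B`. -/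
theorem exists_common_zero [ContractibleSpace Y] {u v : Y → ℝ} (hu : Continuous u)
    (hv : Continuous v) {R T L B : Set Y} (hR : IsPreconnected R) (hT : IsPreconnected T)
    (hL : IsPreconnected L) (hB : IsPreconnected B) (huR : ∀ y ∈ R, 0 ≤ u y)
    (hvT : ∀ y ∈ T, 0 ≤ v y) (huL : ∀ y ∈ L, u y ≤ 0) (hvB : ∀ y ∈ B, v y ≤ 0)
    (hRT : (R ∩ T).Nonempty) (hTL : (T ∩ L).Nonempty) (hLB : (L ∩ B).Nonempty)
    (hBR : (B ∩ R).Nonempty) : ∃ y, u y = 0 ∧ v y = 0 := by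
  by_contra! huv
  obtain ⟨ρ, θ, hθ, hpolar⟩ := exists_polar_coordinates hu hv huv
  have side : ∀ {S : Set Y} (a : ℝ), IsPreconnected S → (∀ y ∈ S, 0 ≤ ρ y * Real.cos (θ y - a)) →
      ∃ n : ℤ, ∀ y ∈ S, |θ y - a - n * (2 * Real.pi)| ≤ Real.pi / 2 := fun a hS h =>
    exists_abs_sub_le_of_cos_nonneg hS (by fun_prop) fun y hy =>
      nonneg_of_mul_nonneg_right (h y hy) (hpolar y).1
  obtain ⟨nR, hnR⟩ := side 0 hR fun y hy => by
    rw [sub_zero, ← (hpolar y).2.1]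
    exact huR y hy
  obtain ⟨nT, hnT⟩ := side (Real.pi / 2) hT fun y hy => by
    rw [Real.cos_sub_pi_div_two, ← (hpolar y).2.2]
    exact hvT y hy
  obtain ⟨nL, hnL⟩ := side Real.pi hL fun y hy => by
    rw [Real.cos_sub_pi, mul_neg, ← (hpolar y).2.1]
    exact neg_nonneg.2 (huL y hy)
  obtain ⟨nB, hnB⟩ := side (Real.pi + Real.pi / 2) hB fun y hy => by
    rw [← sub_sub, Real.cos_sub_pi_div_two, Real.sin_sub_pi, mul_neg, ← (hpolar y).2.2]
    exact neg_nonneg.2 (hvB y hy)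
  obtain ⟨a, haR, haT⟩ := hRT
  obtain ⟨b, hbT, hbL⟩ := hTL
  obtain ⟨c, hcL, hcB⟩ := hLB
  obtain ⟨d, hdB, hdR⟩ := hBR
  have h₁ : nR = nT := eq_of_abs_sub_le_pi_div_two (by ring) (hnR a haR) (hnT a haT)
  have h₂ : nT = nL := eq_of_abs_sub_le_pi_div_two (by ring) (hnT b hbT) (hnL b hbL)
  have h₃ : nL = nB := eq_of_abs_sub_le_pi_div_two (by ring) (hnL c hcL) (hnB c hcB)
  have hdR := abs_le.1 (hnR d hdR)
  have hdB := abs_le.1 (hnB d hdB)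
  rw [h₁, h₂, h₃] at hdR
  linarith [Real.pi_pos]

theorem exists_common_zero_of_mul_neg [ContractibleSpace Y] {u v : Y → ℝ} (hu : Continuous u)
    (hv : Continuous v) {R T L B : Set Y} (hR : IsPreconnected R) (hT : IsPreconnected T)
    (hL : IsPreconnected L) (hB : IsPreconnected B) (huRL : ∀ y ∈ R, ∀ z ∈ L, u y * u z < 0)
    (hvT : ∀ y ∈ T, 0 ≤ v y) (hvB : ∀ y ∈ B, v y ≤ 0)
    (hRT : (R ∩ T).Nonempty) (hTL : (T ∩ L).Nonempty) (hLB : (L ∩ B).Nonempty)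
    (hBR : (B ∩ R).Nonempty) : ∃ y, u y = 0 ∧ v y = 0 := by
  obtain ⟨r, hr, -⟩ := id hRT
  obtain ⟨l, -, hl⟩ := id hTL
  rcases mul_neg_iff.1 (huRL r hr l hl) with ⟨hur, hul⟩ | ⟨hur, hul⟩
  · exact exists_common_zero hu hv hR hT hL hB
      (fun y hy => (pos_of_mul_neg_left (huRL y hy l hl) hul.le).le) hvT
      (fun y hy => (neg_of_mul_neg_right (huRL r hr y hy) hur.le).le) hvB hRT hTL hLB hBR
  · rw [inter_comm] at hRT hTL hLB hBR
    exact exists_common_zero hu hv hL hT hR hB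
      (fun y hy => (pos_of_mul_neg_right (huRL r hr y hy) hur.le).le) hvT
      (fun y hy => (neg_of_mul_neg_left (huRL y hy l hl) hul.le).le) hvB hTL hRT hBR hLB

theorem exists_common_zero_on_of_mul_neg {K : Set Y} [ContractibleSpace K] {u v : Y → ℝ}
    (hu : Continuous u) (hv : Continuous v) {R T L B : Set Y} (hR : IsPreconnected R)
    (hT : IsPreconnected T) (hL : IsPreconnected L) (hB : IsPreconnected B) (hRK : R ⊆ K)
    (hTK : T ⊆ K) (hLK : L ⊆ K) (hBK : B ⊆ K) (huRL : ∀ y ∈ R, ∀ z ∈ L, u y * u z < 0)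
    (hvT : ∀ y ∈ T, 0 ≤ v y) (hvB : ∀ y ∈ B, v y ≤ 0)
    (hRT : (R ∩ T).Nonempty) (hTL : (T ∩ L).Nonempty) (hLB : (L ∩ B).Nonempty)
    (hBR : (B ∩ R).Nonempty) : ∃ y ∈ K, u y = 0 ∧ v y = 0 := by
  have hpre : ∀ {S : Set Y}, IsPreconnected S → S ⊆ K →
      IsPreconnected ((↑) ⁻¹' S : Set K) := fun hS hSK =>
    IsInducing.subtypeVal.isPreconnected_image.1 <| by
      rwa [Subtype.image_preimage_coe, inter_eq_right.2 hSK]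
  have hcorner : ∀ {S S' : Set Y}, S ⊆ K → (S ∩ S').Nonempty →
      ((↑) ⁻¹' S ∩ (↑) ⁻¹' S' : Set K).Nonempty := fun hSK ⟨y, hy⟩ => ⟨⟨y, hSK hy.1⟩, hy⟩
  obtain ⟨y, hy⟩ := exists_common_zero_of_mul_neg (hu.comp continuous_subtype_val)
    (hv.comp continuous_subtype_val) (hpre hR hRK) (hpre hT hTK) (hpre hL hLK) (hpre hB hBK)
    (fun y hy z hz => huRL y hy z hz) (fun y hy => hvT y hy) (fun y hy => hvB y hy)
    (hcorner hRK hRT) (hcorner hTK hTL) (hcorner hLK hLB) (hcorner hBK hBR)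
  exact ⟨y, y.2, hy⟩

end WindingNumber

section CoRays

variable {X : Type*} [MetricSpace X] {c γ : ℝ → X} {b : X → ℝ} {x y : X}

lemma IsGeodesicLine.exists_coray [ProperSpace X] (hc : IsGeodesicLine c)
    (hX : GeodesicMetricSpace X) (y : X) :
    ∃ r : ℝ → X, LipschitzWith 1 r ∧ r 0 = y ∧
      ∀ s, 0 ≤ s → busemann c (r s) ≤ busemann c y - s := by
  choose g hglip hg₀ hg₁ using fun n : ℕ => hX.exists_lipschitz_path y (c n)
  have hball : ∀ n s, g n s ∈ closedBall y |s| := fun n s => by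
    simpa [hg₀, Real.dist_eq] using (hglip n).dist_le_mul s 0
  obtain ⟨r, -, hr⟩ :=
    (isCompact_univ_pi fun s : ℝ => isCompact_closedBall y |s|).ultrafilter_le_nhds
    ((hyperfilter ℕ).map g) (le_principal_iff.2 (mem_map.2 (univ_mem' fun n s _ => hball n s)))
  replace hr : ∀ s, Tendsto (fun n => g n s) (hyperfilter ℕ : Filter ℕ) (𝓝 (r s)) :=
    tendsto_pi_nhds.1 hr
  refine ⟨r, LipschitzWith.mk_one fun s t => ?_, ?_, fun s hs => ?_⟩
  · exact le_of_tendsto' ((hr s).dist (hr t)) fun n => by simpa using (hglip n).dist_le_mul s t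
  · exact tendsto_nhds_unique (hr 0) (tendsto_const_nhds.congr fun n => (hg₀ n).symm)
  · have hlim := ((hc.tendsto_busemann y).comp tendsto_natCast_atTop_atTop).sub_const s
    refine le_of_tendsto_of_tendsto ((hc.continuous_busemann.tendsto (r s)).comp (hr s))
      (hlim.mono_left Nat.hyperfilter_le_atTop) ?_
    have hlong : ∀ᶠ n : ℕ in atTop, s ≤ dist y (c n) := by
      filter_upwards [tendsto_natCast_atTop_atTop.eventually_ge_atTop (s + dist y (c 0))] with n hn
      have := dist_triangle_left (c 0) (c n) y
      rw [hc.dist_of_le n.cast_nonneg] at this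
      linarith
    filter_upwards [Nat.hyperfilter_le_atTop hlong] with n hn
    have hdist := dist_eq_sub_of_lipschitz (hglip n) (a := 0) (b := dist y (c n))
      (by rw [hg₀, hg₁, sub_zero]) hs hn le_rfl
    have := hc.busemann_le (g n s) n
    simp only [Function.comp_apply]
    linarith [hg₁ n ▸ hdist]

/-- A geodesic line along which the height function `b` grows at unit speed. -/
structure IsVertical (b : X → ℝ) (γ : ℝ → X) : Prop where
  isGeodesicLine : IsGeodesicLine γ
  height_eq : ∀ s, b (γ s) = b (γ 0) + s

lemma IsVertical.reverse (h : IsVertical b γ) : IsVertical (fun y => -b y) (reverseLine γ) where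
  isGeodesicLine := h.isGeodesicLine.reverse
  height_eq s := by
    have := h.height_eq (-s)
    simp only [reverseLine, neg_zero]
    linarith

lemma isVertical_of_lipschitz (hb : ∀ x y, b x ≤ b y + dist x y) (hγ : LipschitzWith 1 γ)
    (hheight : ∀ s, b (γ s) = b (γ 0) + s) : IsVertical b γ := by
  refine ⟨fun s t => le_antisymm (by simpa [Real.dist_eq] using hγ.dist_le_mul s t) ?_, hheight⟩
  have hst := hb (γ s) (γ t)
  have hts := hb (γ t) (γ s)
  rw [hheight s, hheight t] at hst hts
  rw [dist_comm] at hts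
  exact abs_le.2 ⟨by linarith, by linarith⟩

lemma lipschitzWith_piecewise_of_eq {r d : ℝ → X} (hr : LipschitzWith 1 r) (hd : LipschitzWith 1 d)
    (h : r 0 = d 0) : LipschitzWith 1 fun s => if 0 ≤ s then r s else d (-s) := by
  have hr' : ∀ s t, dist (r s) (r t) ≤ |s - t| := fun s t => by
    simpa [Real.dist_eq] using hr.dist_le_mul s t
  have hd' : ∀ s t, dist (d s) (d t) ≤ |s - t| := fun s t => by
    simpa [Real.dist_eq] using hd.dist_le_mul s t
  have hmixed : ∀ s t, 0 ≤ s → t < 0 → dist (r s) (d (-t)) ≤ |s - t| := fun s t hs ht => by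
    have hrs := hr' s 0
    have hdt := hd' 0 (-t)
    rw [h, abs_of_nonneg (by linarith)] at hrs
    rw [abs_of_nonpos (by linarith)] at hdt
    rw [abs_of_nonneg (by linarith)]
    linarith [dist_triangle (r s) (d 0) (d (-t))]
  refine LipschitzWith.mk_one fun s t => ?_
  rw [Real.dist_eq]
  split_ifs with hs ht ht
  · exact hr' s t
  · exact hmixed s t hs (not_le.1 ht)
  · rw [dist_comm, abs_sub_comm]
    exact hmixed t s ht (not_le.1 hs)
  · simpa [abs_sub_comm, neg_add_eq_sub] using hd' (-s) (-t)

/-- When the two Busemann functions of `c` cancel, co-rays towards its two ends fit together. -/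
lemma IsGeodesicLine.exists_isVertical [ProperSpace X] (hc : IsGeodesicLine c)
    (hX : GeodesicMetricSpace X)
    (hsum : ∀ y, busemann c y + busemann (reverseLine c) y = 0) (y : X) :
    ∃ γ, IsVertical (busemann (reverseLine c)) γ ∧ γ 0 = y := by
  obtain ⟨r, hr, hr₀, hrb⟩ := hc.exists_coray hX y
  obtain ⟨d, hd, hd₀, hdb⟩ := hc.reverse.exists_coray hX y
  have hγ₀ : (if (0 : ℝ) ≤ 0 then r 0 else d (-0)) = y := by rw [if_pos le_rfl, hr₀]
  refine ⟨fun s => if 0 ≤ s then r s else d (-s), isVertical_of_lipschitz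
    hc.reverse.busemann_le_add_dist (lipschitzWith_piecewise_of_eq hr hd (hr₀.trans hd₀.symm))
    fun s => ?_, hγ₀⟩
  rw [hγ₀]
  rcases le_or_gt 0 s with hs | hs
  · have hdist := hr.dist_le_mul s 0
    have hlip := hc.reverse.busemann_le_add_dist (r s) y
    rw [hr₀, NNReal.coe_one, one_mul, Real.dist_eq, sub_zero, abs_of_nonneg hs] at hdist
    rw [if_pos hs]
    linarith [hrb s hs, hsum y, hsum (r s)]
  · have hdist := hd.dist_le_mul 0 (-s)
    have hlip := hc.reverse.busemann_le_add_dist y (d (-s))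
    rw [hd₀, NNReal.coe_one, one_mul, Real.dist_eq, zero_sub, neg_neg, abs_of_neg hs] at hdist
    rw [if_neg (not_le.2 hs)]
    linarith [hdb (-s) (by linarith)]

end CoRays

section Uniqueness

lemma add_le_add_add_of_mul_le {a b v v' k : ℝ} (hv : 0 < v) (hv' : 0 ≤ v')
    (hmul : a * b ≤ v * v' + k ^ 2) (hsub : |a - b| ≤ 2 * k) :
    a + b ≤ v + v' + 4 * k ^ 2 / v := by
  have hsq : (a - b) ^ 2 ≤ (2 * k) ^ 2 :=
    sq_le_sq' (by linarith [(abs_le.1 hsub).1]) (abs_le.1 hsub).2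
  have hcancel : 4 * k ^ 2 / v * v = 4 * k ^ 2 := div_mul_cancel₀ _ hv.ne'
  have herr : 0 ≤ 4 * k ^ 2 / v := by positivity
  set e := 4 * k ^ 2 / v
  refine le_of_sq_le_sq ?_ (by positivity)
  nlinarith [mul_nonneg hv' herr, sq_nonneg (v - v'), sq_nonneg e]

lemma exists_pos_forall_le_add_mul_sub {f : ℝ → ℝ} (hf : Continuous f) (hf₀ : f 0 = 0)
    (hlim : Tendsto (fun s => f s / |s|) atTop (𝓝 0)) {u : ℝ} (hu : 0 < u) (hfu : 0 < f u) :
    ∃ t κ, 0 < t ∧ 0 < f t ∧ ∀ s, 0 ≤ s → f s ≤ f t + κ * (s - t) := by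
  set κ := f u / (2 * u) with hκ
  have hκ₀ : 0 < κ := by positivity
  have hκu : f u - κ * u = f u / 2 := by
    rw [hκ]
    field_simp
    ring
  obtain ⟨U, hU⟩ := eventually_atTop.1 (hlim.eventually_lt_const hκ₀)
  obtain ⟨t, ht, hmax⟩ := (isCompact_Icc (a := (0 : ℝ)) (b := max U u)).exists_isMaxOn
    ⟨0, le_rfl, le_max_of_le_right hu.le⟩ (f := fun s => f s - κ * s) (by fun_prop)
  have hu_max : f u - κ * u ≤ f t - κ * t :=
    hmax (show u ∈ Icc 0 (max U u) from ⟨hu.le, le_max_right _ _⟩)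
  have ht₀ : 0 < t := by
    refine ht.1.lt_of_ne fun h => ?_
    rw [← h, hf₀] at hu_max
    linarith
  refine ⟨t, κ, ht₀, by linarith [mul_pos hκ₀ ht₀], fun s hs => ?_⟩
  rcases le_or_gt s (max U u) with hsU | hsU
  · have : f s - κ * s ≤ f t - κ * t := hmax (show s ∈ Icc 0 (max U u) from ⟨hs, hsU⟩)
    linarith
  · have hs₀ : 0 < s := hu.trans_le ((le_max_right U u).trans hsU.le)
    have hfs := hU s ((le_max_left U u).trans hsU.le)
    rw [abs_of_pos hs₀, div_lt_iff₀ hs₀] at hfs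
    linarith

/-- At a point where the graph of `f` lies below a line through it, the second difference of `f` is
nonpositive, which the hypothesis forbids for small `k`. -/
lemma eq_zero_of_second_difference_ge {f : ℝ → ℝ} (hf : Continuous f) (hf₀ : f 0 = 0)
    (hnonneg : ∀ s, 0 ≤ f s) (hlim : Tendsto (fun s => f s / |s|) atTop (𝓝 0)) {C : ℝ}
    (hdiff : ∀ t k, 0 < t → 0 < k → 0 < f t →
      f t * k / t ≤ f (t + k) + f (t - k) - 2 * f t + C * k ^ 2 / f t) {u : ℝ} (hu : 0 < u) :
    f u = 0 := by
  by_contra hne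
  obtain ⟨t, κ, ht, hft, hmax⟩ :=
    exists_pos_forall_le_add_mul_sub hf hf₀ hlim hu ((hnonneg u).lt_of_ne' hne)
  have hbound : ∀ k, 0 < k → k ≤ t → f t ^ 2 ≤ C * (t * k) := fun k hk hkt => by
    have hsmall : f t * k / t ≤ C * k ^ 2 / f t := by
      linarith [hdiff t k ht hk hft, hmax (t + k) (by linarith), hmax (t - k) (by linarith)]
    rw [div_le_div_iff₀ ht hft] at hsmall
    exact le_of_mul_le_mul_right (by linarith) hk
  have hsq : 0 < f t ^ 2 := by positivity
  have hC : 0 < C := pos_of_mul_pos_left (hsq.trans_le (hbound t ht le_rfl)) (by positivity)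
  set k := f t ^ 2 / (2 * C * t) with hk
  have hCk : C * (t * k) = f t ^ 2 / 2 := by
    rw [hk]
    field_simp
  have hk_min : C * (t * min t k) ≤ C * (t * k) := by
    gcongr
    exact min_le_right _ _
  linarith [hbound (min t k) (lt_min ht (by positivity)) (min_le_left _ _)]

variable {X : Type*} [MetricSpace X] {b ρ : X → ℝ} {c c' γ : ℝ → X} {m m' x x' y y' z : X}
  {j k t : ℝ}

lemma Ptolemaic.dist_add_dist_le (hX : Ptolemaic X) (hxy : 0 < dist x y) (hx : dist x x' ≤ k)
    (hy : dist y y' ≤ k) :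
    dist x y' + dist y x' ≤ dist x y + dist x' y' + 4 * k ^ 2 / dist x y := by
  refine add_le_add_add_of_mul_le hxy dist_nonneg ?_ (abs_sub_le_iff.2 ⟨?_, ?_⟩)
  · have hptolemy := hX x y' y x'
    have hsides := mul_le_mul hx hy dist_nonneg (dist_nonneg.trans hx)
    rw [dist_comm y' x', dist_comm y' y] at hptolemy
    linarith
  · linarith [dist_triangle4 x x' y y', dist_comm x' y]
  · linarith [dist_triangle4 y y' x x', dist_comm y' x]

lemma IsGeodesicLine.metricMidpoint (hc : IsGeodesicLine c) (hk : 0 ≤ k) :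
    MetricMidpoint (c (t - k)) (c t) (c (t + k)) := by
  rw [MetricMidpoint, hc.dist_of_le (by linarith), hc.dist_of_le (by linarith),
    hc.dist_of_le (by linarith)]
  exact ⟨by ring, by ring⟩

lemma IsGeodesicLine.dist_le_of_meet (hγ : IsGeodesicLine γ) (hc : IsGeodesicLine c)
    (hj : j ∈ Icc 0 k) (hmeet : γ j = c (t + j)) : dist (γ 0) (c (t + k)) ≤ k := by
  have := dist_triangle (γ 0) (γ j) (c (t + k))
  rw [hγ.dist_of_le hj.1, hmeet, hc.dist_of_le (by linarith [hj.2])] at this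
  linarith

lemma IsGeodesicLine.two_mul_dist_le (hc : IsGeodesicLine c) (hX : Ptolemaic X) (hk : 0 ≤ k)
    (x : X) (t : ℝ) : 2 * dist x (c t) ≤ dist x (c (t - k)) + dist x (c (t + k)) := by
  have := (hX.geodesicallyConvexFun_dist x).apply_midpoint_le (hc.metricMidpoint (t := t) hk)
  simp only [dist_comm _ x] at this
  linarith

/-- Each of the quadrilaterals with vertices `c t, c (t + k), m', m`, `c' t, c' (t + k), m', m` and
`c t, c (t - k), c' (t - k), c' t` is flat up to an error quadratic in `k`. -/
lemma Ptolemaic.dist_add_dist_le_of_metricMidpoint (hX : Ptolemaic X) (hc : IsGeodesicLine c)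
    (hc' : IsGeodesicLine c') (ha : 0 < dist (c t) (c' t)) (hm : MetricMidpoint (c t) m (c' t))
    (hm' : MetricBtw (c (t + k)) m' (c' (t + k))) (hmm' : dist m m' ≤ k) :
    dist (c t) m' + dist (c' t) m' ≤ dist (c (t + k)) (c' (t + k)) +
      dist (c (t - k)) (c' (t - k)) - dist (c t) (c' t) + 20 * k ^ 2 / dist (c t) (c' t) := by
  have hk : 0 ≤ k := dist_nonneg.trans hmm'
  have hup : ∀ {d : ℝ → X}, IsGeodesicLine d → dist (d t) (d (t + k)) ≤ k := fun hd =>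
    (hd.dist_of_le (by linarith)).trans_le (by linarith)
  have hdown : ∀ {d : ℝ → X}, IsGeodesicLine d → dist (d t) (d (t - k)) ≤ k := fun hd =>
    (dist_comm _ _).trans_le ((hd.dist_of_le (by linarith)).trans_le (by linarith))
  have hcm : dist (c t) m = dist (c t) (c' t) / 2 := hm.1
  have hc'm : dist (c' t) m = dist (c t) (c' t) / 2 := (dist_comm _ _).trans hm.2
  have hquad₁ := hX.dist_add_dist_le (by rw [hcm]; positivity) (hup hc) hmm'
  have hquad₂ := hX.dist_add_dist_le (by rw [hc'm]; positivity) (hup hc') hmm'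
  have hquad₃ := hX.dist_add_dist_le ha (hdown hc) (hdown hc')
  have hconv₁ := hc.two_mul_dist_le hX hk (c' t) t
  have hconv₂ := hc'.two_mul_dist_le hX hk (c t) t
  have htri₁ := dist_triangle (c' t) m (c (t + k))
  have htri₂ := dist_triangle (c t) m (c' (t + k))
  rw [MetricBtw, dist_comm m'] at hm'
  rw [dist_comm (c' t)] at hconv₁
  rw [hcm] at hquad₁ htri₂
  rw [hc'm] at hquad₂ htri₁
  calc dist (c t) m' + dist (c' t) m'
      ≤ dist (c (t + k)) (c' (t + k)) + dist (c (t - k)) (c' (t - k)) - dist (c t) (c' t) +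
          (2 * (4 * k ^ 2 / (dist (c t) (c' t) / 2)) + 4 * k ^ 2 / dist (c t) (c' t)) := by
        linarith
    _ = _ := by
        field_simp
        ring

/-- A height function `b` together with a coordinate `ρ` which embeds each level set of `b`
isometrically into the real line. -/
structure LevelCoordinates (b ρ : X → ℝ) : Prop where
  height_le_add_dist : ∀ x y, b x ≤ b y + dist x y
  continuous_coordinate : Continuous ρ
  exists_isVertical : ∀ y, ∃ γ, IsVertical b γ ∧ γ 0 = y
  dist_eq : ∀ x y, b x = b y → dist x y = |ρ x - ρ y|
  geodesicallyConvex_level : ∀ u, GeodesicallyConvex {y | b y = u}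

namespace LevelCoordinates

lemma neg (L : LevelCoordinates b ρ) : LevelCoordinates (fun y => -b y) ρ where
  height_le_add_dist x y := by linarith [L.height_le_add_dist y x, dist_comm x y]
  continuous_coordinate := L.continuous_coordinate
  exists_isVertical y := by
    obtain ⟨γ, hγ, rfl⟩ := L.exists_isVertical y
    exact ⟨reverseLine γ, hγ.reverse, by rw [reverseLine, neg_zero]⟩
  dist_eq x y h := L.dist_eq x y (neg_injective h)
  geodesicallyConvex_level u := by
    simpa only [neg_eq_iff_eq_neg] using L.geodesicallyConvex_level (-u)

lemma metricBtw_iff (L : LevelCoordinates b ρ) (hx : b x = b z) (hy : b y = b z) :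
    MetricBtw x z y ↔ 0 ≤ (ρ z - ρ x) * (ρ y - ρ z) := by
  rw [MetricBtw, dist_comm x z, dist_comm z y, dist_comm x y, L.dist_eq z x hx.symm,
    L.dist_eq y z hy, L.dist_eq y x (hy.trans hx.symm), mul_nonneg_iff, ← abs_add_eq_add_abs_iff,
    eq_comm, sub_add_sub_comm, add_comm (ρ z), add_sub_add_right_eq_sub]

/-- The vertical line through `m` either stays between `c` and `c'` up to height `k` above `m` or
meets one of them on the way. -/
lemma exists_metricBtw_add (L : LevelCoordinates b ρ) (hc : IsVertical b c) (hc' : IsVertical b c')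
    (h₀ : b (c 0) = b (c' 0)) (hk : 0 ≤ k) (hm : MetricBtw (c t) m (c' t)) :
    ∃ m', MetricBtw (c (t + k)) m' (c' (t + k)) ∧ dist m m' ≤ k := by
  have hlevel : ∀ s, b (c' s) = b (c s) := fun s => by rw [hc.height_eq, hc'.height_eq, h₀]
  have hbm : b m = b (c t) := L.geodesicallyConvex_level _ _ rfl _ (hlevel t) _ hm
  obtain ⟨γ, hγ, rfl⟩ := L.exists_isVertical m
  have hbγ : ∀ s, b (c (t + s)) = b (γ s) := fun s => by
    rw [hγ.height_eq, hbm, hc.height_eq, hc.height_eq t]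
    ring
  have hbγ' : ∀ s, b (c' (t + s)) = b (γ s) := fun s => (hlevel _).trans (hbγ s)
  have hmeet : ∀ {d : ℝ → X} {j : ℝ}, b (d (t + j)) = b (γ j) → ρ (γ j) = ρ (d (t + j)) →
      γ j = d (t + j) := fun hb hρ => by
    rw [← dist_eq_zero, L.dist_eq _ _ hb.symm, hρ, sub_self, abs_zero]
  set f : ℝ → ℝ := fun s => (ρ (γ s) - ρ (c (t + s))) * (ρ (c' (t + s)) - ρ (γ s)) with hf
  have hfcont : Continuous f := by
    have hρ := L.continuous_coordinate
    have hγcont := hγ.isGeodesicLine.isometry.continuous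
    have hccont := hc.isGeodesicLine.isometry.continuous
    have hc'cont := hc'.isGeodesicLine.isometry.continuous
    fun_prop
  have hf₀ : 0 ≤ f 0 := by
    rw [← add_zero t] at hm
    exact (L.metricBtw_iff (hbγ 0) (hbγ' 0)).1 hm
  rcases le_or_gt 0 (f k) with hfk | hfk
  · exact ⟨γ k, (L.metricBtw_iff (hbγ k) (hbγ' k)).2 hfk,
      (hγ.isGeodesicLine.dist_of_le hk).trans_le (sub_zero k).le⟩
  obtain ⟨j, hj, hfj⟩ := intermediate_value_Icc' hk hfcont.continuousOn ⟨hfk.le, hf₀⟩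
  rcases mul_eq_zero.1 hfj with hρ | hρ
  · exact ⟨c (t + k), by rw [MetricBtw, dist_self, zero_add],
      hγ.isGeodesicLine.dist_le_of_meet hc.isGeodesicLine hj
        (hmeet (hbγ j) (sub_eq_zero.1 hρ))⟩
  · exact ⟨c' (t + k), by rw [MetricBtw, dist_self, add_zero],
      hγ.isGeodesicLine.dist_le_of_meet hc'.isGeodesicLine hj
        (hmeet (hbγ' j) (sub_eq_zero.1 hρ).symm)⟩

/-- Ptolemy's inequality for `c t, c' t, c 0, m'`, where `m'` lies at height `t + k`, turns the
triangle with apex `c 0` into a lower bound for the second difference of its width. -/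
lemma dist_mul_div_le (L : LevelCoordinates b ρ) (hX : Ptolemaic X) (hgeo : GeodesicMetricSpace X)
    (hc : IsVertical b c) (hc' : IsVertical b c') (h₀ : c 0 = c' 0) (ht : 0 < t) (hk : 0 < k)
    (ha : 0 < dist (c t) (c' t)) :
    dist (c t) (c' t) * k / t ≤ dist (c (t + k)) (c' (t + k)) + dist (c (t - k)) (c' (t - k)) -
      2 * dist (c t) (c' t) + 20 * k ^ 2 / dist (c t) (c' t) := by
  obtain ⟨m, hm⟩ := hgeo.exists_midpoint_s19 (c t) (c' t)
  obtain ⟨m', hm', hmm'⟩ := L.exists_metricBtw_add hc hc' (congrArg b h₀) hk.le hm.metricBtw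
  have hbm' : b m' = b (c (t + k)) :=
    L.geodesicallyConvex_level _ _ rfl _ (by rw [mem_ofPred_eq, hc.height_eq, hc'.height_eq, h₀])
      _ hm'
  have hheight : t + k ≤ dist (c 0) m' := by
    have := L.height_le_add_dist m' (c 0)
    rw [hbm', hc.height_eq, dist_comm] at this
    linarith
  have hct : dist (c t) (c 0) = t := by
    rw [dist_comm, hc.isGeodesicLine.dist_of_le ht.le, sub_zero]
  have hc't : dist (c' t) (c 0) = t := by
    rw [h₀, dist_comm, hc'.isGeodesicLine.dist_of_le ht.le, sub_zero]
  have hptolemy := hX (c t) (c' t) (c 0) m'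
  have hupper := mul_le_mul_of_nonneg_left (hX.dist_add_dist_le_of_metricMidpoint
    hc.isGeodesicLine hc'.isGeodesicLine ha hm hm' hmm') ht.le
  have hlower := mul_le_mul_of_nonneg_left hheight ha.le
  rw [hct, hc't] at hptolemy
  rw [div_le_iff₀ ht]
  linarith

lemma eq_of_tendsto_atTop (L : LevelCoordinates b ρ) (hX : Ptolemaic X)
    (hgeo : GeodesicMetricSpace X) (hc : IsVertical b c) (hc' : IsVertical b c') (h₀ : c 0 = c' 0)
    (hlim : Tendsto (fun s => dist (c s) (c' s) / |s|) atTop (𝓝 0)) (ht : 0 < t) :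
    c t = c' t :=
  dist_eq_zero.1 <| eq_zero_of_second_difference_ge (f := fun s => dist (c s) (c' s))
    (hc.isGeodesicLine.isometry.continuous.dist hc'.isGeodesicLine.isometry.continuous)
    (dist_eq_zero.2 h₀) (fun _ => dist_nonneg) hlim
    (fun _ _ ht hk ha => L.dist_mul_div_le hX hgeo hc hc' h₀ ht hk ha) ht

theorem eq_of_parallelLines (L : LevelCoordinates b ρ) (hX : Ptolemaic X)
    (hgeo : GeodesicMetricSpace X) (hc : IsVertical b c) (hc' : IsVertical b c') (h₀ : c 0 = c' 0)
    (hpar : ParallelLines c c') : c = c' := by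
  funext t
  rcases lt_trichotomy t 0 with ht | rfl | ht
  · have := L.neg.eq_of_tendsto_atTop hX hgeo hc.reverse hc'.reverse
      (by rwa [reverseLine, reverseLine, neg_zero]) hpar.reverse.1 (neg_pos.2 ht)
    rwa [reverseLine, reverseLine, neg_neg] at this
  · exact h₀
  · exact L.eq_of_tendsto_atTop hX hgeo hc hc' h₀ hpar.1 ht

end LevelCoordinates

end Uniqueness

section Strip

variable {X : Type*} [MetricSpace X] {h : ℝ × Icc (0 : ℝ) 1 ≃ₜ X} {c₀ c₁ : ℝ → X} {x y : X}

/-- The first coordinate of a point in the global chart `h`. -/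
def abscissa (h : ℝ × Icc (0 : ℝ) 1 ≃ₜ X) (y : X) : ℝ := (h.symm y).1

/-- The second coordinate of a point in the global chart `h`. -/
def ordinate (h : ℝ × Icc (0 : ℝ) 1 ≃ₜ X) (y : X) : ℝ := (h.symm y).2

lemma continuous_abscissa : Continuous (abscissa h) := continuous_fst.comp h.symm.continuous

lemma continuous_ordinate : Continuous (ordinate h) :=
  continuous_subtype_val.comp (continuous_snd.comp h.symm.continuous)

lemma ordinate_nonneg (h : ℝ × Icc (0 : ℝ) 1 ≃ₜ X) (y : X) : 0 ≤ ordinate h y := (h.symm y).2.2.1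

lemma ordinate_le_one (h : ℝ × Icc (0 : ℝ) 1 ≃ₜ X) (y : X) : ordinate h y ≤ 1 := (h.symm y).2.2.2

lemma eq_of_abscissa_eq_of_ordinate_eq (hp : abscissa h x = abscissa h y)
    (hq : ordinate h x = ordinate h y) : x = y :=
  h.symm.injective (Prod.ext hp (Subtype.ext hq))

lemma isCompact_abs_abscissa_le (h : ℝ × Icc (0 : ℝ) 1 ≃ₜ X) (M : ℝ) :
    IsCompact {y | |abscissa h y| ≤ M} := by
  have hpre : {y | |abscissa h y| ≤ M} = h.symm ⁻¹' (Icc (-M) M ×ˢ univ) := by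
    ext y
    simp only [abscissa, abs_le, mem_ofPred_eq, mem_preimage, mem_prod, mem_Icc, mem_univ, and_true]
  rw [hpre, h.symm.isCompact_preimage]
  exact isCompact_Icc.prod isCompact_univ

lemma forall_lt_or_forall_lt_neg_of_lt_abs {Y : Type*} [TopologicalSpace Y] {A : Set Y} {f : Y → ℝ}
    (hA : IsPreconnected A) (hf : Continuous f) {M : ℝ} (hM : 0 ≤ M) (hfA : ∀ y ∈ A, M < |f y|) :
    (∀ y ∈ A, M < f y) ∨ ∀ y ∈ A, f y < -M := by
  refine hA.subset_or_subset (isOpen_lt continuous_const hf) (isOpen_lt hf continuous_const)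
    (disjoint_left.2 fun y (hy : M < f y) (hy' : f y < -M) => by linarith)
    fun y hy => (lt_abs.1 (hfA y hy)).imp_right lt_neg_of_lt_neg

lemma IsGeodesicLine.exists_horoball_on_one_side {c : ℝ → X} (hc : IsGeodesicLine c)
    (hX : Ptolemaic X) (hgeo : GeodesicMetricSpace X) (h : ℝ × Icc (0 : ℝ) 1 ≃ₜ X) {M : ℝ}
    (hM : 0 ≤ M) :
    ∃ B, ∀ B' ≥ B, (∀ y, busemann c y < -B' → M < abscissa h y) ∨
      ∀ y, busemann c y < -B' → abscissa h y < -M := by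
  obtain ⟨m, hm⟩ :=
    (isCompact_abs_abscissa_le h M).bddBelow_image hc.continuous_busemann.continuousOn
  refine ⟨-m, fun B' hB' => forall_lt_or_forall_lt_neg_of_lt_abs
    (((hc.geodesicallyConvexFun_busemann hX).geodesicallyConvex_lt (-B')).isPreconnected hgeo)
    continuous_abscissa hM fun y (hy : busemann c y < -B') => not_le.1 fun hle => ?_⟩
  have := hm (mem_image_of_mem _ hle)
  linarith

/-- The geometric configuration of the theorem: a geodesic ptolemaic space with a chart `h` onto
the strip `ℝ × [0, 1]` whose boundary lines are traced by the parallel geodesic lines `c₀`, `c₁`. -/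
structure ParallelStrip (h : ℝ × Icc (0 : ℝ) 1 ≃ₜ X) (c₀ c₁ : ℝ → X) : Prop where
  ptolemaic : Ptolemaic X
  geodesic : GeodesicMetricSpace X
  line₀ : IsGeodesicLine c₀
  line₁ : IsGeodesicLine c₁
  parallel : ParallelLines c₀ c₁
  range₀ : range c₀ = h '' {p : ℝ × Icc (0 : ℝ) 1 | (p.2 : ℝ) = 0}
  range₁ : range c₁ = h '' {p : ℝ × Icc (0 : ℝ) 1 | (p.2 : ℝ) = 1}

namespace ParallelStrip

lemma ordinate_line₀ (S : ParallelStrip h c₀ c₁) (s : ℝ) : ordinate h (c₀ s) = 0 := by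
  obtain ⟨z, hz, hzs⟩ := S.range₀ ▸ mem_range_self (f := c₀) s
  rw [← hzs, ordinate, h.symm_apply_apply, hz]

lemma ordinate_line₁ (S : ParallelStrip h c₀ c₁) (s : ℝ) : ordinate h (c₁ s) = 1 := by
  obtain ⟨z, hz, hzs⟩ := S.range₁ ▸ mem_range_self (f := c₁) s
  rw [← hzs, ordinate, h.symm_apply_apply, hz]

lemma exists_abscissa_line₀_eq_zero (S : ParallelStrip h c₀ c₁) : ∃ s, abscissa h (c₀ s) = 0 := by
  obtain ⟨s, hs⟩ : h (0, 0) ∈ range c₀ := S.range₀ ▸ mem_image_of_mem h rfl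
  exact ⟨s, by rw [hs, abscissa, h.symm_apply_apply]⟩

lemma exists_abscissa_mul_neg (S : ParallelStrip h c₀ c₁) (B : ℝ) :
    ∃ s t, B < s ∧ t < -B ∧ abscissa h (c₀ s) * abscissa h (c₀ t) < 0 := by
  obtain ⟨s₀, hs₀⟩ := S.exists_abscissa_line₀_eq_zero
  have hcont : Continuous (abscissa h ∘ c₀) := continuous_abscissa.comp S.line₀.isometry.continuous
  have hinj : (abscissa h ∘ c₀).Injective := fun s t hst =>
    S.line₀.isometry.injective (eq_of_abscissa_eq_of_ordinate_eq hst
      ((S.ordinate_line₀ s).trans (S.ordinate_line₀ t).symm))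
  obtain ⟨s, hs⟩ := exists_gt (max B s₀)
  obtain ⟨t, ht⟩ := exists_lt (min (-B) s₀)
  obtain ⟨hBs, hs₀s⟩ := max_lt_iff.1 hs
  obtain ⟨htB, hts₀⟩ := lt_min_iff.1 ht
  refine ⟨s, t, hBs, htB, ?_⟩
  rcases hcont.strictMono_of_inj hinj with hmono | hanti
  · exact mul_neg_of_pos_of_neg (hs₀ ▸ hmono hs₀s) (hs₀ ▸ hmono hts₀)
  · exact mul_neg_of_neg_of_pos (hs₀ ▸ hanti hs₀s) (hs₀ ▸ hanti hts₀)

/-- Deep horoballs at the two ends of `c₀` avoid a large compact piece of the strip and are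
connected, so they lie on opposite sides of it. -/
lemma exists_abscissa_sub_mul_neg (S : ParallelStrip h c₀ c₁) {M : ℝ} (hM : 0 ≤ M) :
    ∃ B, ∀ y z, busemann c₀ y < -B → busemann (reverseLine c₀) z < -B →
      ∀ a b, |a| ≤ M → |b| ≤ M → (abscissa h y - a) * (abscissa h z - b) < 0 := by
  obtain ⟨B₀, hB₀⟩ := S.line₀.exists_horoball_on_one_side S.ptolemaic S.geodesic h hM
  obtain ⟨B₁, hB₁⟩ := S.line₀.reverse.exists_horoball_on_one_side S.ptolemaic S.geodesic h hM
  set B := max B₀ B₁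
  obtain ⟨s, t, hs, ht, hst⟩ := S.exists_abscissa_mul_neg B
  have hcs : busemann c₀ (c₀ s) < -B := by rwa [S.line₀.busemann_apply_self, neg_lt_neg_iff]
  have hct : busemann (reverseLine c₀) (c₀ t) < -B := by
    rwa [S.line₀.busemann_reverse_apply_self]
  refine ⟨B, fun y z hy hz a b ha hb => ?_⟩
  have ⟨ha', ha''⟩ := abs_le.1 ha
  have ⟨hb', hb''⟩ := abs_le.1 hb
  rcases hB₀ B (le_max_left _ _) with hpos | hpos <;>
    rcases hB₁ B (le_max_right _ _) with hneg | hneg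
  · exact absurd hst (mul_pos (hM.trans_lt (hpos _ hcs)) (hM.trans_lt (hneg _ hct))).not_gt
  · exact mul_neg_of_pos_of_neg (by linarith [hpos y hy]) (by linarith [hneg z hz])
  · exact mul_neg_of_neg_of_pos (by linarith [hpos y hy]) (by linarith [hneg z hz])
  · exact absurd hst (mul_pos_of_neg_of_neg (by linarith [hpos _ hcs])
      (by linarith [hneg _ hct])).not_gt

lemma exists_boundary_mem_horoballs (S : ParallelStrip h c₀ c₁) (B : ℝ) :
    ∃ T, 0 ≤ T ∧ busemann c₀ (c₀ T) < -B ∧ busemann c₀ (c₁ T) < -B ∧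
      busemann (reverseLine c₀) (c₀ (-T)) < -B ∧ busemann (reverseLine c₀) (c₁ (-T)) < -B := by
  set α := busemann c₀ (c₁ 0)
  set β := busemann (reverseLine c₀) (c₁ 0)
  refine ⟨|B| + |α| + |β| + 1, by positivity, ?_⟩
  rw [S.line₀.busemann_apply_self, S.line₀.busemann_reverse_apply_self,
    S.parallel.busemann_apply S.ptolemaic S.line₀ S.line₁,
    S.parallel.busemann_reverse_apply S.ptolemaic S.line₀ S.line₁]
  have hB := le_abs_self B
  have hα := le_abs_self α
  have hβ := le_abs_self β
  have hα₀ := abs_nonneg α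
  have hβ₀ := abs_nonneg β
  refine ⟨?_, ?_, ?_, ?_⟩ <;> linarith

/-- The two boundary segments and the two horoballs cut by `K` surround `x`; as `K` is contractible,
no continuous coordinates on it can avoid those of `x`. -/
lemma exists_mem_of_image_Icc_subset (S : ParallelStrip h c₀ c₁) (x : X) :
    ∃ T, ∀ K, GeodesicallyConvex K → IsCompact K → c₀ '' Icc (-T) T ⊆ K → c₁ '' Icc (-T) T ⊆ K →
      x ∈ K := by
  obtain ⟨B, hB⟩ := S.exists_abscissa_sub_mul_neg (abs_nonneg (abscissa h x))
  obtain ⟨T, hT₀, hend₀, hend₁, hend₀', hend₁'⟩ := S.exists_boundary_mem_horoballs B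
  have hT : T ∈ Icc (-T) T := ⟨by linarith, le_rfl⟩
  have hT' : -T ∈ Icc (-T) T := ⟨le_rfl, hT.1⟩
  refine ⟨T, fun K hK hKcompact hK₀ hK₁ => ?_⟩
  have hmem₀ := image_subset_iff.1 hK₀
  have hmem₁ := image_subset_iff.1 hK₁
  have := hK.contractibleSpace S.ptolemaic S.geodesic hKcompact ⟨_, hmem₀ hT⟩
  have hhoroball := fun {c : ℝ → X} (hc : IsGeodesicLine c) =>
    (hK.inter ((hc.geodesicallyConvexFun_busemann S.ptolemaic).geodesicallyConvex_lt
      (-B))).isPreconnected S.geodesic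
  have hside := fun {c : ℝ → X} (hc : IsGeodesicLine c) =>
    (isPreconnected_Icc (a := -T) (b := T)).image c hc.isometry.continuous.continuousOn
  obtain ⟨y, hyK, hyp, hyq⟩ := exists_common_zero_on_of_mul_neg
    (u := fun y => abscissa h y - abscissa h x) (v := fun y => ordinate h y - ordinate h x)
    (continuous_abscissa.sub continuous_const) (continuous_ordinate.sub continuous_const)
    (hhoroball S.line₀) (hside S.line₁) (hhoroball S.line₀.reverse) (hside S.line₀)
    inter_subset_left hK₁ inter_subset_left hK₀
    (fun y hy z hz => hB y z hy.2 hz.2 _ _ le_rfl le_rfl)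
    (forall_mem_image.2 fun s _ => by linarith [S.ordinate_line₁ s, ordinate_le_one h x])
    (forall_mem_image.2 fun s _ => by linarith [S.ordinate_line₀ s, ordinate_nonneg h x])
    ⟨c₁ T, ⟨hmem₁ hT, hend₁⟩, T, hT, rfl⟩ ⟨c₁ (-T), ⟨-T, hT', rfl⟩, hmem₁ hT', hend₁'⟩
    ⟨c₀ (-T), ⟨hmem₀ hT', hend₀'⟩, -T, hT', rfl⟩ ⟨c₀ T, ⟨T, hT, rfl⟩, hmem₀ hT, hend₀⟩
  exact eq_of_abscissa_eq_of_ordinate_eq (sub_eq_zero.1 hyp) (sub_eq_zero.1 hyq) ▸ hyK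

/-- The sublevel set of the sum at height zero is convex and contains both boundary lines, so it is
the whole strip. -/
theorem busemann_add_busemann_reverse_eq_zero [ProperSpace X] (S : ParallelStrip h c₀ c₁) (x : X) :
    busemann c₀ x + busemann (reverseLine c₀) x = 0 := by
  obtain ⟨T, hT⟩ := S.exists_mem_of_image_Icc_subset x
  obtain ⟨R, hR⟩ := ((isCompact_Icc.image S.line₀.isometry.continuous).union
    (isCompact_Icc.image S.line₁.isometry.continuous)).isBounded.subset_closedBall x
  set G := {y | busemann c₀ y + busemann (reverseLine c₀) y ≤ 0}
  have hG : GeodesicallyConvex G := ((S.line₀.geodesicallyConvexFun_busemann S.ptolemaic).add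
    (S.line₀.reverse.geodesicallyConvexFun_busemann S.ptolemaic)).geodesicallyConvex_le 0
  have hGclosed : IsClosed G := isClosed_le
    (S.line₀.continuous_busemann.add S.line₀.reverse.continuous_busemann) continuous_const
  have hG₀ : ∀ s, c₀ s ∈ G := fun s => by
    rw [mem_ofPred_eq, S.line₀.busemann_apply_self, S.line₀.busemann_reverse_apply_self,
      neg_add_cancel]
  have hG₁ : ∀ s, c₁ s ∈ G := fun s =>
    (S.parallel.busemann_add_busemann_reverse_eq_zero S.ptolemaic S.line₀ S.line₁ s).le
  have hx : x ∈ G ∩ closedBall x R := hT _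
    (hG.inter (S.ptolemaic.geodesicallyConvex_closedBall x R))
    ((isCompact_closedBall x R).inter_left hGclosed)
    (subset_inter (image_subset_iff.2 fun s _ => hG₀ s) (subset_union_left.trans hR))
    (subset_inter (image_subset_iff.2 fun s _ => hG₁ s) (subset_union_right.trans hR))
  exact le_antisymm hx.1 (S.line₀.busemann_add_busemann_reverse_nonneg x)

lemma exists_isVertical [ProperSpace X] (S : ParallelStrip h c₀ c₁) (y : X) :
    ∃ γ, IsVertical (busemann (reverseLine c₀)) γ ∧ γ 0 = y :=
  S.line₀.exists_isVertical S.geodesic S.busemann_add_busemann_reverse_eq_zero y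

lemma isVertical (S : ParallelStrip h c₀ c₁) {c : ℝ → X} (hc : IsGeodesicLine c)
    (hpar : ParallelLines c c₀) : IsVertical (busemann (reverseLine c₀)) c :=
  ⟨hc, hpar.symm.busemann_reverse_apply S.ptolemaic S.line₀ hc⟩

lemma geodesicallyConvex_level [ProperSpace X] (S : ParallelStrip h c₀ c₁) (u : ℝ) :
    GeodesicallyConvex {y | busemann (reverseLine c₀) y = u} := by
  have hlevel : {y | busemann (reverseLine c₀) y = u} =
      {y | busemann (reverseLine c₀) y ≤ u} ∩ {y | busemann c₀ y ≤ -u} := by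
    ext y
    have := S.busemann_add_busemann_reverse_eq_zero y
    simp only [mem_inter_iff, mem_ofPred_eq]
    exact ⟨fun h => ⟨h.le, by linarith⟩, fun h => le_antisymm h.1 (by linarith [h.2])⟩
  rw [hlevel]
  exact ((S.line₀.reverse.geodesicallyConvexFun_busemann S.ptolemaic).geodesicallyConvex_le u).inter
    ((S.line₀.geodesicallyConvexFun_busemann S.ptolemaic).geodesicallyConvex_le (-u))

lemma exists_vertical_mem_horoballs [ProperSpace X] (S : ParallelStrip h c₀ c₁) {γ : ℝ → X}
    (hγ : IsVertical (busemann (reverseLine c₀)) γ) (B : ℝ) :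
    ∃ T, 0 ≤ T ∧ busemann c₀ (γ T) < -B ∧ busemann (reverseLine c₀) (γ (-T)) < -B := by
  refine ⟨|B| + |busemann (reverseLine c₀) (γ 0)| + 1, by positivity, ?_, ?_⟩
  · rw [eq_neg_of_add_eq_zero_left (S.busemann_add_busemann_reverse_eq_zero _), hγ.height_eq]
    linarith [le_abs_self B, neg_abs_le (busemann (reverseLine c₀) (γ 0))]
  · rw [hγ.height_eq]
    linarith [le_abs_self B, le_abs_self (busemann (reverseLine c₀) (γ 0))]

/-- On the boundary of `[-T, T] × [0, D]` the difference of the coordinates of `γ s` and `σ t`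
winds around the origin once. -/
lemma exists_vertical_eq_path [ProperSpace X] (S : ParallelStrip h c₀ c₁) {γ σ : ℝ → X}
    (hγ : IsVertical (busemann (reverseLine c₀)) γ) (hσ : Continuous σ) {u v D : ℝ} (hD : 0 ≤ D)
    (hσ₀ : σ 0 = c₀ u) (hσD : σ D = c₁ v) : ∃ s, ∃ t ∈ Icc 0 D, γ s = σ t := by
  have hγcont := hγ.isGeodesicLine.isometry.continuous
  have h₀ : (0 : ℝ) ∈ Icc 0 D := ⟨le_rfl, hD⟩
  have h₁ : D ∈ Icc 0 D := ⟨hD, le_rfl⟩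
  obtain ⟨M, hM⟩ := isCompact_Icc.exists_bound_of_continuousOn (s := Icc 0 D)
    ((continuous_abscissa (h := h)).comp hσ).continuousOn
  obtain ⟨B, hB⟩ := S.exists_abscissa_sub_mul_neg ((norm_nonneg _).trans (hM 0 h₀))
  obtain ⟨T, hT₀, hTB, hTB'⟩ := S.exists_vertical_mem_horoballs hγ B
  have hT : T ∈ Icc (-T) T := ⟨by linarith, le_rfl⟩
  have hT' : -T ∈ Icc (-T) T := ⟨le_rfl, hT.1⟩
  have : ContractibleSpace (univ ×ˢ Icc 0 D : Set (ℝ × ℝ)) :=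
    (convex_univ.prod (convex_Icc 0 D)).contractibleSpace ⟨(0, 0), mem_univ _, h₀⟩
  obtain ⟨⟨s, t⟩, hst, hp, hq⟩ := exists_common_zero_on_of_mul_neg
    (K := (univ ×ˢ Icc 0 D : Set (ℝ × ℝ)))
    (u := fun z : ℝ × ℝ => abscissa h (γ z.1) - abscissa h (σ z.2))
    (v := fun z : ℝ × ℝ => ordinate h (γ z.1) - ordinate h (σ z.2))
    (by have := continuous_abscissa (h := h); fun_prop)
    (by have := continuous_ordinate (h := h); fun_prop)
    (R := {T} ×ˢ Icc 0 D) (T := Icc (-T) T ×ˢ {0}) (L := {-T} ×ˢ Icc 0 D) (B := Icc (-T) T ×ˢ {D})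
    (isPreconnected_singleton.prod isPreconnected_Icc)
    (isPreconnected_Icc.prod isPreconnected_singleton)
    (isPreconnected_singleton.prod isPreconnected_Icc)
    (isPreconnected_Icc.prod isPreconnected_singleton)
    (prod_mono (subset_univ _) subset_rfl)
    (prod_mono (subset_univ _) (singleton_subset_iff.2 h₀))
    (prod_mono (subset_univ _) subset_rfl)
    (prod_mono (subset_univ _) (singleton_subset_iff.2 h₁))
    (by
      rintro ⟨_, t⟩ ⟨rfl, ht⟩ ⟨_, t'⟩ ⟨rfl, ht'⟩
      exact hB _ _ hTB hTB' _ _ (hM t ht) (hM t' ht'))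
    (by
      rintro ⟨s, _⟩ ⟨-, rfl⟩
      simpa only [hσ₀, S.ordinate_line₀, sub_zero] using ordinate_nonneg h (γ s))
    (by
      rintro ⟨s, _⟩ ⟨-, rfl⟩
      simpa only [hσD, S.ordinate_line₁, sub_nonpos] using ordinate_le_one h (γ s))
    ⟨(T, 0), ⟨rfl, h₀⟩, hT, rfl⟩ ⟨(-T, 0), ⟨hT', rfl⟩, rfl, h₀⟩
    ⟨(-T, D), ⟨rfl, h₁⟩, hT', rfl⟩ ⟨(T, D), ⟨hT, rfl⟩, rfl, h₁⟩
  exact ⟨s, t, hst.2, eq_of_abscissa_eq_of_ordinate_eq (sub_eq_zero.1 hp) (sub_eq_zero.1 hq)⟩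

lemma exists_path_onto_level [ProperSpace X] (S : ParallelStrip h c₀ c₁) (u : ℝ) :
    ∃ (D : ℝ) (g : ℝ → X), D = dist (c₀ u) (c₁ (u - busemann (reverseLine c₀) (c₁ 0))) ∧
      g 0 = c₀ u ∧ (∀ s ∈ Icc 0 D, ∀ t ∈ Icc 0 D, dist (g s) (g t) = |s - t|) ∧
      {y | busemann (reverseLine c₀) y = u} ⊆ g '' Icc 0 D := by
  obtain ⟨g, hg, hg₀, hg₁⟩ :=
    S.geodesic.exists_lipschitz_path (c₀ u) (c₁ (u - busemann (reverseLine c₀) (c₁ 0)))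
  set D := dist (c₀ u) (c₁ (u - busemann (reverseLine c₀) (c₁ 0))) with hD
  have hdist : dist (g 0) (g D) = D - 0 := by rw [hg₀, hg₁, sub_zero, hD]
  have hlevel : ∀ t ∈ Icc 0 D, busemann (reverseLine c₀) (g t) = u := fun t ht => by
    refine S.geodesicallyConvex_level u (g 0) ?_ (g D) ?_ _ (metricBtw_of_lipschitz hg hdist ht)
    · rw [mem_ofPred_eq, hg₀, S.line₀.busemann_reverse_apply_self]
    · rw [mem_ofPred_eq, hg₁, S.parallel.busemann_reverse_apply S.ptolemaic S.line₀ S.line₁,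
        add_sub_cancel]
  refine ⟨D, g, hD, hg₀, fun s hs t ht => ?_, fun y hy => ?_⟩
  · rcases le_total s t with hst | hst
    · rw [dist_eq_sub_of_lipschitz hg hdist hs.1 hst ht.2, abs_sub_comm,
        abs_of_nonneg (sub_nonneg.2 hst)]
    · rw [dist_comm, dist_eq_sub_of_lipschitz hg hdist ht.1 hst hs.2,
        abs_of_nonneg (sub_nonneg.2 hst)]
  · obtain ⟨γ, hγ, rfl⟩ := S.exists_isVertical y
    obtain ⟨s, t, ht, hst⟩ := S.exists_vertical_eq_path hγ hg.continuous dist_nonneg hg₀ hg₁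
    have hs := hγ.height_eq s
    rw [hst, hlevel t ht, hy, left_eq_add] at hs
    exact ⟨t, ht, by rw [← hst, hs]⟩

theorem levelCoordinates [ProperSpace X] (S : ParallelStrip h c₀ c₁) :
    LevelCoordinates (busemann (reverseLine c₀))
      (fun y => dist (c₀ (busemann (reverseLine c₀) y)) y) where
  height_le_add_dist := S.line₀.reverse.busemann_le_add_dist
  continuous_coordinate :=
    (S.line₀.isometry.continuous.comp S.line₀.reverse.continuous_busemann).dist continuous_id
  exists_isVertical := S.exists_isVertical
  dist_eq x y hxy := by
    obtain ⟨D, g, -, hg₀, hg, hlevel⟩ := S.exists_path_onto_level (busemann (reverseLine c₀) x)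
    obtain ⟨s, hs, rfl⟩ := hlevel rfl
    obtain ⟨t, ht, rfl⟩ := hlevel hxy.symm
    have h₀ : (0 : ℝ) ∈ Icc 0 D := ⟨le_rfl, hs.1.trans hs.2⟩
    rw [← hxy, ← hg₀, hg s hs t ht, hg 0 h₀ s hs, hg 0 h₀ t ht, zero_sub, abs_neg, zero_sub,
      abs_neg, abs_of_nonneg hs.1, abs_of_nonneg ht.1]
  geodesicallyConvex_level := S.geodesicallyConvex_level

lemma dist_line₀_le [ProperSpace X] (S : ParallelStrip h c₀ c₁) {u : ℝ}
    (hy : busemann (reverseLine c₀) y = u) :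
    dist (c₀ u) y ≤ dist (c₀ u) (c₁ (u - busemann (reverseLine c₀) (c₁ 0))) := by
  obtain ⟨D, g, hD, hg₀, hg, hlevel⟩ := S.exists_path_onto_level u
  obtain ⟨t, ht, rfl⟩ := hlevel hy
  rw [← hD, ← hg₀, hg 0 ⟨le_rfl, ht.1.trans ht.2⟩ t ht, zero_sub, abs_neg, abs_of_nonneg ht.1]
  exact ht.2

theorem parallelLines_of_isVertical [ProperSpace X] (S : ParallelStrip h c₀ c₁) {γ : ℝ → X}
    (hγ : IsVertical (busemann (reverseLine c₀)) γ) : ParallelLines γ c₀ := by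
  set β := busemann (reverseLine c₀) (γ 0)
  set β₁ := busemann (reverseLine c₀) (c₁ 0)
  refine S.parallel.of_dist_le (M := |β| + |β| + |β - β₁|) fun s => ?_
  have hwidth := S.dist_line₀_le (hγ.height_eq s)
  have hshift₀ : dist (c₀ (β + s)) (c₀ s) = |β| := by rw [S.line₀, add_sub_cancel_right]
  have hshift₁ : dist (c₁ s) (c₁ (β + s - β₁)) = |β - β₁| := by
    rw [S.line₁, abs_sub_comm]
    congr 1
    ring
  linarith [dist_triangle_left (γ s) (c₀ s) (c₀ (β + s)),
    dist_triangle4 (c₀ (β + s)) (c₀ s) (c₁ s) (c₁ (β + s - β₁))]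

theorem eq_of_parallelLines [ProperSpace X] (S : ParallelStrip h c₀ c₁) {c c' : ℝ → X}
    (hc : IsGeodesicLine c) (hc' : IsGeodesicLine c') (hpar : ParallelLines c c₀)
    (hpar' : ParallelLines c' c₀) (h₀ : c 0 = c' 0) : c = c' :=
  S.levelCoordinates.eq_of_parallelLines S.ptolemaic S.geodesic (S.isVertical hc hpar)
    (S.isVertical hc' hpar') h₀ (hpar.trans hpar'.symm)

end ParallelStrip

end Strip

/-- **In a proper geodesic PT strip bounded by two parallel lines, every point
lies on a unique line parallel to the boundary lines.** -/
theorem unique_parallel_line_through_point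
    (X : Type*) [MetricSpace X] [ProperSpace X]
    (hPT : Ptolemaic X) (hgeo : GeodesicMetricSpace X)
    (h : (ℝ × (Set.Icc (0:ℝ) 1)) ≃ₜ X)
    (c₀ c₁ : ℝ → X)
    (hc₀ : IsGeodesicLine c₀) (hc₁ : IsGeodesicLine c₁)
    (hpar : ParallelLines c₀ c₁)
    (him₀ : Set.range c₀ = ⇑h '' {p : ℝ × (Set.Icc (0:ℝ) 1) | (p.2 : ℝ) = 0})
    (him₁ : Set.range c₁ = ⇑h '' {p : ℝ × (Set.Icc (0:ℝ) 1) | (p.2 : ℝ) = 1}) :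
    ∀ x : X, ∃! cx : ℝ → X,
      IsGeodesicLine cx ∧ cx 0 = x ∧ ParallelLines cx c₀ := by
  intro x
  have S : ParallelStrip h c₀ c₁ := ⟨hPT, hgeo, hc₀, hc₁, hpar, him₀, him₁⟩
  obtain ⟨γ, hγ, hγx⟩ := S.exists_isVertical x
  have hγpar := S.parallelLines_of_isVertical hγ
  refine ⟨γ, ⟨hγ.isGeodesicLine, hγx, hγpar⟩, fun c ⟨hc, hcx, hcpar⟩ => ?_⟩
  exact S.eq_of_parallelLines hc hγ.isGeodesicLine hcpar hγpar (hcx.trans hγx.symm)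
end
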